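/- arXiv:2210.02434 — 7 statements merged into one kernel-verified Lean document; each statement's English description precedes it below -/
import Mathlib

section
/- (Theorem of Baptiste and Sadykov, as used in the paper.) Let 𝓘 = {I_r}_{r∈Q} be a partition of the time horizon based on due dates and let σ = {σ_r}_{r∈Q} be a set of permutations consistent with the WSPT/LPT ordering rules. If for each r ∈ Q and each pair of jobs i, j ∈ J with σ_r(i) < σ_r(j) at least one of the conditions (1) e_r ≤ e_{r−1} + p_j or (2) e_{r−1} ≥ d_i + ⌈w_j·p_i / w_i⌉ − p_i holds, then the partition is appropriate: there exists an optimal schedule without idle time in which all completion times are at most T and such that for every r ∈ Q and every pair of jobs i ≠ j with μ(i) = μ(j), C_i ∈ I_r, C_j ∈ I_r and σ_r(i) < σ_r(j), job i is sequenced before job j (S_i < S_j). -/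
open Finset

/-- Disjoint intervals inside a finite set. -/
lemma bs_sum_le_card {n : ℕ} (p S : Fin n → ℕ) (A : Finset (Fin n)) (X : Finset ℕ)
    (hd : ∀ i ∈ A, ∀ j ∈ A, i ≠ j → S i + p i ≤ S j ∨ S j + p j ≤ S i)
    (hX : ∀ i ∈ A, ∀ u, S i ≤ u → u < S i + p i → u ∈ X) :
    ∑ i ∈ A, p i ≤ X.card := by
  have h1 : (A.biUnion (fun i => Finset.Ico (S i) (S i + p i))).card = ∑ i ∈ A, p i := by
    rw [Finset.card_biUnion]
    · simp
    · intro i hi j hj hij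
      simp only [Function.onFun]
      rw [Finset.disjoint_left]
      intro u hu hu'
      simp only [Finset.mem_Ico] at hu hu'
      rcases hd i hi j hj hij with h | h <;> omega
  rw [← h1]
  apply Finset.card_le_card
  intro u hu
  simp only [Finset.mem_biUnion, Finset.mem_Ico] at hu
  obtain ⟨i, hi, h2, h3⟩ := hu
  exact hX i hi u h2 h3

/-- Left shift of a schedule. -/
lemma bs_compact {n m : ℕ} (p : Fin n → ℕ) (hp : ∀ j, 0 < p j)
    (μ : Fin n → Fin m) (S : Fin n → ℕ)
    (hd : ∀ i j, i ≠ j → μ i = μ j → S i + p i ≤ S j ∨ S j + p j ≤ S i) :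
    ∃ S' : Fin n → ℕ,
      (∀ i j, i ≠ j → μ i = μ j → S' i + p i ≤ S' j ∨ S' j + p j ≤ S' i) ∧
      (∀ j, S' j + p j ≤ ∑ l ∈ univ.filter (fun l => μ l = μ j), p l) ∧
      (∀ j, S' j ≤ S j) := by
  refine ⟨fun j => ∑ l ∈ univ.filter (fun l => μ l = μ j ∧ S l < S j), p l, ?_, ?_, ?_⟩
  · have key : ∀ i j, μ i = μ j → S i < S j →
        ∑ l ∈ univ.filter (fun l => μ l = μ i ∧ S l < S i), p l + p i
          ≤ ∑ l ∈ univ.filter (fun l => μ l = μ j ∧ S l < S j), p l := by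
      intro i j hμ hS
      rw [add_comm, ← Finset.sum_insert (f := p) (a := i) (by simp)]
      apply Finset.sum_le_sum_of_subset
      intro l hl
      simp only [Finset.mem_insert, Finset.mem_filter, Finset.mem_univ, true_and] at hl ⊢
      rcases hl with rfl | ⟨h1, h2⟩
      · exact ⟨hμ, hS⟩
      · exact ⟨h1.trans hμ, h2.trans hS⟩
    intro i j hij hμ
    have h1 := hp i
    have h2 := hp j
    rcases hd i j hij hμ with h | h
    · exact Or.inl (key i j hμ (by omega))
    · exact Or.inr (key j i hμ.symm (by omega))
  · intro j
    simp only
    rw [add_comm, ← Finset.sum_insert (f := p) (a := j) (by simp)]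
    apply Finset.sum_le_sum_of_subset
    intro l hl
    simp only [Finset.mem_insert, Finset.mem_filter, Finset.mem_univ, true_and] at hl ⊢
    rcases hl with rfl | ⟨h1, h2⟩
    · rfl
    · exact h1
  · intro j
    have := bs_sum_le_card p S (univ.filter (fun l => μ l = μ j ∧ S l < S j)) (range (S j)) ?_ ?_
    · simpa using this
    · intro i hi l hl hil
      simp only [Finset.mem_filter, Finset.mem_univ, true_and] at hi hl
      exact hd i l hil (hi.1.trans hl.1.symm)
    · intro i hi u h1 h2
      simp only [Finset.mem_filter, Finset.mem_univ, true_and] at hi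
      have hne : i ≠ j := by rintro rfl; omega
      have h3 := hp j
      rw [Finset.mem_range]
      rcases hd i j hne hi.1 with h | h <;> omega

/-- Lexicographic minimum of three objectives. -/
lemma bs_lexmin {α : Type*} (P : α → Prop) (hP : ∃ a, P a) (f g h : α → ℕ) :
    ∃ a, P a ∧ ∀ b, P b → f a < f b ∨ f a = f b ∧ (g a < g b ∨ g a = g b ∧ h a ≤ h b) := by
  have one : ∀ (Q : α → Prop) (k : α → ℕ), (∃ a, Q a) → ∃ a, Q a ∧ ∀ b, Q b → k a ≤ k b := by
    intro Q k hQ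
    obtain ⟨a, ha, h2⟩ := (measure k).wf.has_min {a | Q a} hQ
    exact ⟨a, ha, fun b hb => not_lt.mp (h2 b hb)⟩
  obtain ⟨a, ha, ha'⟩ := one P f hP
  obtain ⟨b, hb, hb'⟩ := one (fun x => P x ∧ f x = f a) g ⟨a, ha, rfl⟩
  obtain ⟨c, hc, hc'⟩ := one (fun x => (P x ∧ f x = f a) ∧ g x = g b) h ⟨b, hb, rfl⟩
  refine ⟨c, hc.1.1, fun x hx => ?_⟩
  have h1 := ha' x hx
  by_cases h2 : f x = f a
  · have h3 := hb' x ⟨hx, h2⟩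
    by_cases h4 : g x = g b
    · have h5 := hc' x ⟨⟨hx, h2⟩, h4⟩
      have := hc.1.2
      have := hc.2
      omega
    · have := hc.1.2
      have := hc.2
      omega
  · have := hc.1.2
    omega

/-- Two functions that agree off a pair. -/
lemma bs_two {n : ℕ} (f g : Fin n → ℕ) (i j : Fin n) (hij : i ≠ j)
    (h : ∀ l, l ≠ i → l ≠ j → f l = g l) :
    ∃ R, ∑ l, f l = f i + f j + R ∧ ∑ l, g l = g i + g j + R := by
  refine ⟨∑ l ∈ (univ.erase i).erase j, f l, ?_, ?_⟩
  · rw [← Finset.add_sum_erase univ f (Finset.mem_univ i),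
      ← Finset.add_sum_erase (univ.erase i) f (a := j) (by simp [hij.symm])]
    ring
  · rw [← Finset.add_sum_erase univ g (Finset.mem_univ i),
      ← Finset.add_sum_erase (univ.erase i) g (a := j) (by simp [hij.symm])]
    have : ∑ l ∈ (univ.erase i).erase j, f l = ∑ l ∈ (univ.erase i).erase j, g l := by
      apply Finset.sum_congr rfl
      intro l hl
      simp only [Finset.mem_erase, Finset.mem_univ, and_true] at hl
      exact h l hl.2 hl.1
    rw [this]
    ring

/-- If all machines but one carry load at least `s` the completion time is bounded. -/
lemma bs_load {n m : ℕ} (hm : 1 ≤ m) (p : Fin n → ℕ) (T : ℕ)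
    (hT : T = ((∑ j, p j) - univ.sup p + m - 1) / m + univ.sup p)
    (μ : Fin n → Fin m) (j : Fin n) (s : ℕ)
    (hown : s + p j ≤ ∑ l ∈ univ.filter (fun l => μ l = μ j), p l)
    (hoth : ∀ k, k ≠ μ j → s ≤ ∑ l ∈ univ.filter (fun l => μ l = k), p l) :
    s + p j ≤ T := by
  have h1 : ∑ k, ∑ l ∈ univ.filter (fun l => μ l = k), p l = ∑ l, p l :=
    Finset.sum_fiberwise univ μ p
  have h2 : ∑ k : Fin m, (s + if k = μ j then p j else 0)
      ≤ ∑ k, ∑ l ∈ univ.filter (fun l => μ l = k), p l := by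
    apply Finset.sum_le_sum
    intro k _
    by_cases hk : k = μ j
    · subst hk; simpa using hown
    · simpa [hk] using hoth k hk
  rw [h1, Finset.sum_add_distrib] at h2
  simp at h2
  have h3 : p j ≤ univ.sup p := Finset.le_sup (f := p) (Finset.mem_univ j)
  set M := univ.sup p with hM
  set P := ∑ l, p l with hPdef
  have h4 : M ≤ P := by
    apply Finset.sup_le
    intro l _
    exact Finset.single_le_sum (f := p) (fun _ _ => Nat.zero_le _) (Finset.mem_univ l)
  set c := (P - M + m - 1) / m with hc
  have h5 : P - M ≤ m * c := by
    have := Nat.div_add_mod (P - M + m - 1) m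
    have h6 := Nat.mod_lt (P - M + m - 1) (show m > 0 by omega)
    rw [← hc] at this
    omega
  by_contra hcon
  obtain ⟨t, ht⟩ := Nat.exists_eq_add_of_le h3
  have h6 : c + t + 1 ≤ s := by omega
  have h7 : m * (c + t + 1) ≤ m * s := Nat.mul_le_mul_left m h6
  have h8 : t ≤ m * t := Nat.le_mul_of_pos_left t hm
  have h9 : m * (c + t + 1) = m * c + m * t + m := by ring
  omega

set_option maxHeartbeats 2000000

/-- Theorem of Baptiste and Sadykov.  Let `0 = e₀ < e₁ < … < e_q = T` define a
partition of the time horizon `(0, T]` into intervals `I_r = (e_{r-1}, e_r]` that is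
based on due dates, and let `σ_r` be permutations consistent with the WSPT/LPT
ordering rules.  If for each interval `r` and each pair `i, j` with
`σ_r i < σ_r j` either `e_r ≤ e_{r-1} + pⱼ` or
`e_{r-1} ≥ dᵢ + ⌈wⱼ·pᵢ/wᵢ⌉ − pᵢ` holds, then the partition is appropriate:
there is an optimal idle-time-free schedule with all completion times at most `T`
such that within each interval, on each machine, jobs are sequenced according to
`σ_r`. -/
theorem baptiste_sadykov_appropriate_partition
    (n m : ℕ) (hm : 1 ≤ m) (p w d : Fin n → ℕ)
    (hp : ∀ j, 0 < p j) (hw : ∀ j, 0 < w j)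
    (T : ℕ) (hT : T = ((∑ j, p j) - univ.sup p + m - 1) / m + univ.sup p)
    (q : ℕ) (e : Fin (q + 1) → ℕ) (σ : Fin q → Equiv.Perm (Fin n))
    (he0 : e 0 = 0) (heT : e (Fin.last q) = T) (hmono : StrictMono e)
    -- the partition is based on due dates
    (hdue : ∀ j, ∃ r : Fin q, d j = e r.succ)
    -- σ is consistent with the WSPT/LPT ordering rules:
    -- long jobs precede short jobs
    (hlong : ∀ (r : Fin q) (i j : Fin n),
      e r.succ - e r.castSucc ≤ p i → p j < e r.succ - e r.castSucc →
      σ r i < σ r j)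
    -- a short late job precedes a short on-time job
    (hlate_ontime : ∀ (r : Fin q) (i j : Fin n),
      p i < e r.succ - e r.castSucc → p j < e r.succ - e r.castSucc →
      d i ≤ e r.castSucc → e r.succ ≤ d j → σ r i < σ r j)
    -- short on-time jobs follow the LPT rule
    (hontime_lpt : ∀ (r : Fin q) (i j : Fin n),
      p i < e r.succ - e r.castSucc → p j < e r.succ - e r.castSucc →
      e r.succ ≤ d i → e r.succ ≤ d j → p j < p i → σ r i < σ r j)
    -- short late jobs follow the WSPT rule (pᵢ/wᵢ < pⱼ/wⱼ, cross-multiplied)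
    (hlate_wspt : ∀ (r : Fin q) (i j : Fin n),
      p i < e r.succ - e r.castSucc → p j < e r.succ - e r.castSucc →
      d i ≤ e r.castSucc → d j ≤ e r.castSucc →
      p i * w j < p j * w i → σ r i < σ r j)
    -- ties among short late jobs are broken by LPT
    (hlate_tie : ∀ (r : Fin q) (i j : Fin n),
      p i < e r.succ - e r.castSucc → p j < e r.succ - e r.castSucc →
      d i ≤ e r.castSucc → d j ≤ e r.castSucc →
      p i * w j = p j * w i → p j < p i → σ r i < σ r j)
    -- the conditions of the theorem: (1) e_r ≤ e_{r-1} + pⱼ, or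
    -- (2) e_{r-1} ≥ dᵢ + ⌈wⱼ·pᵢ/wᵢ⌉ − pᵢ (rearranged in ℕ)
    (hcond : ∀ (r : Fin q) (i j : Fin n), σ r i < σ r j →
      e r.succ ≤ e r.castSucc + p j ∨
      d i + (w j * p i + w i - 1) / w i ≤ e r.castSucc + p i) :
    ∃ (μ : Fin n → Fin m) (S : Fin n → ℕ),
      -- (μ, S) is a schedule
      (∀ i j, i ≠ j → μ i = μ j → S i + p i ≤ S j ∨ S j + p j ≤ S i) ∧
      -- no idle time
      (∀ k : Fin m, ∀ u, u < ∑ j ∈ univ.filter (fun j => μ j = k), p j →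
        ∃ j, μ j = k ∧ S j ≤ u ∧ u < S j + p j) ∧
      -- all completion times at most T
      (∀ j, S j + p j ≤ T) ∧
      -- optimality for total weighted tardiness
      (∀ (μ' : Fin n → Fin m) (S' : Fin n → ℕ),
        (∀ i j, i ≠ j → μ' i = μ' j → S' i + p i ≤ S' j ∨ S' j + p j ≤ S' i) →
        ∑ j, w j * (S j + p j - d j) ≤ ∑ j, w j * (S' j + p j - d j)) ∧
      -- jobs completing in the same interval on the same machine follow σ_r
      (∀ (r : Fin q) (i j : Fin n), i ≠ j → μ i = μ j →
        e r.castSucc < S i + p i → S i + p i ≤ e r.succ →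
        e r.castSucc < S j + p j → S j + p j ≤ e r.succ →
        σ r i < σ r j → S i < S j) := by
  classical
  have hP1 : ∀ A : Finset (Fin n), ∑ l ∈ A, p l ≤ ∑ l, p l := fun A =>
    Finset.sum_le_sum_of_subset (Finset.subset_univ A)
  have hpP : ∀ j, p j ≤ ∑ l, p l := fun j =>
    Finset.single_le_sum (f := p) (fun _ _ => Nat.zero_le _) (Finset.mem_univ j)
  have hstep : ∀ r : Fin q, e r.castSucc < e r.succ := fun r =>
    hmono (Fin.castSucc_lt_succ (i := r))
  have hdT : ∀ j, d j ≤ T := by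
    intro j
    obtain ⟨r, hr⟩ := hdue j
    rw [hr, ← heT]
    exact hmono.monotone (Fin.le_last _)
  have hdich : ∀ j (r : Fin q), d j ≤ e r.castSucc ∨ e r.succ ≤ d j := by
    intro j r
    obtain ⟨s, hs⟩ := hdue j
    rw [hs]
    rcases lt_or_ge s r with h | h
    · left
      apply hmono.monotone
      rw [Fin.le_def]
      have := Fin.lt_def.mp h
      simp only [Fin.val_succ, Fin.val_castSucc]
      omega
    · right
      apply hmono.monotone
      exact Fin.succ_le_succ_iff.mpr h
  -- the tie-breaking potential
  obtain ⟨H, hH⟩ : ∃ H : Fin n → ℕ → ℕ, ∀ (r : Fin q) j t, e r.castSucc < t → t ≤ e r.succ →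
      H j t = (n - (σ r j).val) * t := by
    refine ⟨fun j t => ∑ r : Fin q, if e r.castSucc < t ∧ t ≤ e r.succ
      then (n - (σ r j).val) * t else 0, ?_⟩
    intro r j t h1 h2
    simp only
    rw [Finset.sum_eq_single r]
    · simp [h1, h2]
    · intro s _ hsr
      rw [if_neg]
      rintro ⟨h3, h4⟩
      rcases lt_or_gt_of_ne hsr with h | h
      · have : e s.succ ≤ e r.castSucc := by
          apply hmono.monotone
          rw [Fin.le_def]
          have := Fin.lt_def.mp h
          simp only [Fin.val_succ, Fin.val_castSucc]
          omega
        omega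
      · have : e r.succ ≤ e s.castSucc := by
          apply hmono.monotone
          rw [Fin.le_def]
          have := Fin.lt_def.mp h
          simp only [Fin.val_succ, Fin.val_castSucc]
          omega
        omega
    · simp
  -- the chosen schedule
  obtain ⟨⟨μ, S⟩, ⟨hdis, hbd⟩, hmin⟩ := bs_lexmin
    (fun x : (Fin n → Fin m) × (Fin n → ℕ) =>
      (∀ i j, i ≠ j → x.1 i = x.1 j → x.2 i + p i ≤ x.2 j ∨ x.2 j + p j ≤ x.2 i) ∧
      (∀ j, x.2 j + p j ≤ ∑ l ∈ univ.filter (fun l => x.1 l = x.1 j), p l))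
    (by
      obtain ⟨S', h1, h2, _⟩ := bs_compact p hp (fun _ => (⟨0, hm⟩ : Fin m))
        (fun j => j.val * ∑ l, p l) (by
          have key : ∀ i j : Fin n, i < j →
              i.val * ∑ l, p l + p i ≤ j.val * ∑ l, p l := by
            intro i j hij
            have h1 : (i.val + 1) * ∑ l, p l ≤ j.val * ∑ l, p l :=
              Nat.mul_le_mul_right _ (Fin.lt_def.mp hij)
            have h2 := hpP i
            rw [Nat.succ_mul] at h1
            omega
          intro i j hij _
          rcases lt_or_gt_of_ne hij with h | h
          · exact Or.inl (key i j h)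
          · exact Or.inr (key j i h))
      exact ⟨(fun _ => ⟨0, hm⟩, S'), h1, h2⟩)
    (fun x => ∑ j, w j * (x.2 j + p j - d j))
    (fun x => ∑ j, ((∑ l, p l) - x.2 j))
    (fun x => ∑ j, H j (x.2 j + p j))
  simp only at hdis hbd hmin
  have hopt : ∀ (μ' : Fin n → Fin m) (S' : Fin n → ℕ),
        (∀ i j, i ≠ j → μ' i = μ' j → S' i + p i ≤ S' j ∨ S' j + p j ≤ S' i) →
        ∑ j, w j * (S j + p j - d j) ≤ ∑ j, w j * (S' j + p j - d j) := by
    intro μ' S' hd'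
    obtain ⟨S'', h1, h2, h3⟩ := bs_compact p hp μ' S' hd'
    have h4 := hmin (μ', S'') ⟨h1, h2⟩
    simp only at h4
    have h5 : ∑ j, w j * (S'' j + p j - d j) ≤ ∑ j, w j * (S' j + p j - d j) := by
      apply Finset.sum_le_sum
      intro j _
      apply Nat.mul_le_mul_left
      have := h3 j
      omega
    omega
  have hidle : ∀ k : Fin m, ∀ u, u < ∑ j ∈ univ.filter (fun j => μ j = k), p j →
        ∃ j, μ j = k ∧ S j ≤ u ∧ u < S j + p j := by
    intro k u hu
    by_contra hcon
    push Not at hcon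
    have := bs_sum_le_card p S (univ.filter (fun j => μ j = k))
      ((range (∑ j ∈ univ.filter (fun j => μ j = k), p j)).erase u) ?_ ?_
    · rw [Finset.card_erase_of_mem (Finset.mem_range.mpr hu), Finset.card_range] at this
      omega
    · intro i hi j hj hij
      simp only [Finset.mem_filter, Finset.mem_univ, true_and] at hi hj
      exact hdis i j hij (hi.trans hj.symm)
    · intro i hi v h1 h2
      simp only [Finset.mem_filter, Finset.mem_univ, true_and] at hi
      rw [Finset.mem_erase, Finset.mem_range]
      constructor
      · rintro rfl
        have := hcon i hi h1
        omega
      · have := hbd i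
        rw [hi] at this
        omega
  have hTb : ∀ j, S j + p j ≤ T := by
    intro j
    by_contra hcon
    have h1 : ∃ k, k ≠ μ j ∧ ∑ l ∈ univ.filter (fun l => μ l = k), p l < S j := by
      by_contra hno
      push Not at hno
      exact hcon (bs_load hm p T hT μ j (S j) (hbd j) hno)
    obtain ⟨k, hk, hlt⟩ := h1
    have h2 := hopt (Function.update μ j k)
      (Function.update S j (∑ l ∈ univ.filter (fun l => μ l = k), p l)) (by
        intro a b hab hμ
        by_cases ha : a = j
        · subst ha
          have hb : b ≠ a := hab.symm
          simp only [Function.update_self, Function.update_of_ne hb] at hμ ⊢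
          have := hbd b
          rw [← hμ] at this
          exact Or.inr this
        · by_cases hb : b = j
          · subst hb
            simp only [Function.update_self, Function.update_of_ne ha] at hμ ⊢
            have := hbd a
            rw [hμ] at this
            exact Or.inl this
          · simp only [Function.update_of_ne ha, Function.update_of_ne hb] at hμ ⊢
            exact hdis a b hab hμ)
    have h3 : ∑ l, w l * (Function.update S j (∑ l ∈ univ.filter (fun l => μ l = k), p l) l
        + p l - d l) < ∑ l, w l * (S l + p l - d l) := by
      have hj : Function.update S j (∑ l ∈ univ.filter (fun l => μ l = k), p l) j < S j := by
        simpa using hlt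
      apply Finset.sum_lt_sum
      · intro l _
        apply Nat.mul_le_mul_left
        by_cases hl : l = j
        · subst hl; omega
        · rw [Function.update_of_ne hl]
      · refine ⟨j, Finset.mem_univ j, ?_⟩
        apply Nat.mul_lt_mul_of_pos_left _ (hw j)
        have := hdT j
        omega
    omega
  refine ⟨μ, S, hdis, hidle, hTb, hopt, ?_⟩
  -- no violated pair, by induction on the distance of the two start times
  intro r
  have hmain : ∀ N : ℕ, ∀ i j, i ≠ j → μ i = μ j →
        e r.castSucc < S j + p j → S i + p i ≤ e r.succ →
        σ r i < σ r j → S j + p j ≤ S i → S i ≤ S j + N → False := by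
    intro N
    induction N using Nat.strong_induction_on with
    | _ N ih =>
    intro i j hij hμ hCj hCi hσ hji hN
    have hr := hstep r
    have hpi := hp i
    have hpj := hp j
    have hwi := hw i
    have hwj := hw j
    by_cases hadj : S j + p j < S i
    · -- not adjacent: there is a job in between
      have hload := hbd i
      rw [hμ] at hload
      obtain ⟨l, hl1, hl2, hl3⟩ := hidle (μ j) (S j + p j) (by omega)
      have hlj : l ≠ j := by rintro rfl; omega
      have hli : l ≠ i := by rintro rfl; omega
      have hpl := hp l
      have hSl : S l = S j + p j := by
        rcases hdis l j hlj hl1 with h | h <;> omega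
      have hSl2 : S l + p l ≤ S i := by
        rcases hdis l i hli (hl1.trans hμ.symm) with h | h <;> omega
      rcases lt_trichotomy (σ r l) (σ r j) with h | h | h
      · exact ih (N - 1) (by omega) l j hlj hl1 hCj (by omega) h (by omega) (by omega)
      · exact hlj ((σ r).injective h)
      · exact ih (N - 1) (by omega) i l hli.symm (hμ.trans hl1.symm) (by omega) hCi
          (hσ.trans h) (by omega) (by omega)
    have hSi : S i = S j + p j := by omega
    have hshi : p i < e r.succ - e r.castSucc := by omega
    have hshj : p j < e r.succ - e r.castSucc := by
      by_contra hc
      exact absurd (hlong r j i (by omega) hshi) (not_lt.mpr hσ.le)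
    have hc2 : d i + (w j * p i + w i - 1) / w i ≤ e r.castSucc + p i := by
      rcases hcond r i j hσ with h | h
      · omega
      · exact h
    have hceil : w j * p i ≤ w i * ((w j * p i + w i - 1) / w i) := by
      have h1 := Nat.div_add_mod (w j * p i + w i - 1) (w i)
      have h2 := Nat.mod_lt (w j * p i + w i - 1) hwi
      omega
    -- the swapped schedule
    obtain ⟨S', hS'i, hS'j, hS'⟩ : ∃ S' : Fin n → ℕ, S' i = S j ∧ S' j = S j + p i ∧
        ∀ l, l ≠ i → l ≠ j → S' l = S l := by
      refine ⟨Function.update (Function.update S i (S j)) j (S j + p i), ?_, ?_, ?_⟩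
      · simp [hij]
      · simp
      · intro l h1 h2
        simp [h1, h2]
    have hout : ∀ l, l ≠ i → l ≠ j → μ l = μ j → S l + p l ≤ S j ∨ S j + p j + p i ≤ S l := by
      intro l h1 h2 h3
      have := hp l
      rcases hdis l j h2 h3 with h | h <;> rcases hdis l i h1 (h3.trans hμ.symm) with h' | h' <;>
        omega
    have hv1 : ∀ a b, a ≠ b → μ a = μ b → S' a + p a ≤ S' b ∨ S' b + p b ≤ S' a := by
      intro a b hab hμab
      by_cases hai : a = i
      · subst hai
        by_cases hbj : b = j
        · subst hbj; omega
        · have h1 := hout b hab.symm hbj (hμab.symm.trans hμ)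
          have h2 := hS' b hab.symm hbj
          omega
      · by_cases haj : a = j
        · subst haj
          by_cases hbi : b = i
          · subst hbi; omega
          · have h1 := hout b hbi hab.symm hμab.symm
            have h2 := hS' b hbi hab.symm
            omega
        · have h0 := hS' a hai haj
          by_cases hbi : b = i
          · subst hbi
            have h1 := hout a hai haj (hμab.trans hμ)
            omega
          · by_cases hbj : b = j
            · subst hbj
              have h1 := hout a hai haj hμab
              omega
            · have h2 := hS' b hbi hbj
              have := hdis a b hab hμab
              omega
    have hv2 : ∀ a, S' a + p a ≤ ∑ l ∈ univ.filter (fun l => μ l = μ a), p l := by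
      intro a
      have hbi := hbd i
      by_cases hai : a = i
      · subst hai; omega
      · by_cases haj : a = j
        · subst haj; rw [hμ] at hbi; omega
        · rw [hS' a hai haj]; exact hbd a
    have hcmp := hmin (μ, S') ⟨hv1, hv2⟩
    simp only at hcmp
    obtain ⟨R1, hR1, hR1'⟩ := bs_two (fun l => w l * (S l + p l - d l))
      (fun l => w l * (S' l + p l - d l)) i j hij
      (by intro l h1 h2; simp only [hS' l h1 h2])
    obtain ⟨R2, hR2, hR2'⟩ := bs_two (fun l => (∑ l, p l) - S l)
      (fun l => (∑ l, p l) - S' l) i j hij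
      (by intro l h1 h2; simp only [hS' l h1 h2])
    obtain ⟨R3, hR3, hR3'⟩ := bs_two (fun l => H l (S l + p l))
      (fun l => H l (S' l + p l)) i j hij
      (by intro l h1 h2; simp only [hS' l h1 h2])
    rw [hR1, hR1', hR2, hR2', hR3, hR3'] at hcmp
    simp only [hS'i, hS'j, hSi] at hcmp
    -- secondary argument, once the cost is equal and the lengths compare
    have hfin : p j ≤ p i → w i * (S j + p j + p i - d i) + w j * (S j + p j - d j) ≥
        w i * (S j + p i - d i) + w j * (S j + p i + p j - d j) → False := by
      intro hpp hcost
      have hb1 : S i + p i ≤ ∑ l, p l := (hbd i).trans (hP1 _)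
      rcases hpp.lt_or_eq with hlt | heq
      · omega
      · have e1 := hH r i (S j + p j + p i) (by omega) (by omega)
        have e2 := hH r j (S j + p j) (by omega) (by omega)
        have e3 := hH r i (S j + p i) (by omega) (by omega)
        have e4 := hH r j (S j + p i + p j) (by omega) (by omega)
        have hlt : n - (σ r j).val < n - (σ r i).val := by
          have h1 := Fin.lt_def.mp hσ
          have h2 := (σ r j).isLt
          omega
        have h5 : (n - (σ r i).val) * (S j + p i) + (n - (σ r j).val) * (S j + p i + p j)
            < (n - (σ r i).val) * (S j + p j + p i) + (n - (σ r j).val) * (S j + p j) := by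
          rw [heq]
          obtain ⟨t, ht⟩ := Nat.exists_eq_add_of_lt hlt
          rw [ht]
          nlinarith [Nat.zero_le (t * p i)]
        rw [e1, e2, e3, e4] at hcmp
        omega
    rcases hdich j r with hdj | hdj
    · -- `j` late
      rcases hdich i r with hdi | hdi
      · -- both late
        have hinc : w j * (S j + p i + p j - d j) = w j * (S j + p j - d j) + w j * p i := by
          rw [← Nat.mul_add]; congr 1; omega
        by_cases hlt : S j + p i < d i
        · -- the gain is at least the ceiling plus one
          have h0 : S j + p i - d i = 0 := by omega
          have h1 : (w j * p i + w i - 1) / w i + 1 ≤ S j + p j + p i - d i := by omega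
          have h2 := Nat.mul_le_mul_left (w i) h1
          rw [Nat.mul_add, Nat.mul_one] at h2
          rw [h0, hinc, Nat.mul_zero] at hcmp
          omega
        · have hdec : w i * (S j + p j + p i - d i) = w i * (S j + p i - d i) + w i * p j := by
            rw [← Nat.mul_add]; congr 1; omega
          have hws : p i * w j ≤ p j * w i := by
            by_contra hc
            exact absurd (hlate_wspt r j i hshj hshi hdj hdi (by omega)) (not_lt.mpr hσ.le)
          have c1 : w j * p i = p i * w j := Nat.mul_comm _ _
          have c2 : w i * p j = p j * w i := Nat.mul_comm _ _
          rcases hws.lt_or_eq with hlt' | heq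
          · omega
          · have hpp : p j ≤ p i := by
              by_contra hc
              exact absurd (hlate_tie r j i hshj hshi hdj hdi heq.symm (by omega))
                (not_lt.mpr hσ.le)
            exact hfin hpp (by omega)
      · exact absurd (hlate_ontime r j i hshj hshi hdj hdi) (not_lt.mpr hσ.le)
    · -- `j` on time
      have z1 : S j + p j - d j = 0 := by omega
      have z2 : S j + p i + p j - d j = 0 := by omega
      rcases hdich i r with hdi | hdi
      · have h1 : w i * (S j + p i - d i) < w i * (S j + p j + p i - d i) :=
          Nat.mul_lt_mul_of_pos_left (by omega) hwi
        rw [z1, z2] at hcmp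
        omega
      · have z3 : S j + p i - d i = 0 := by omega
        have z4 : S j + p j + p i - d i = 0 := by omega
        have hpp : p j ≤ p i := by
          by_contra hc
          exact absurd (hontime_lpt r j i hshj hshi hdj hdi (by omega)) (not_lt.mpr hσ.le)
        exact hfin hpp (by rw [z1, z2, z3, z4])
  intro i j hij hμ h1 h2 h3 h4 hσ
  have := hp i
  rcases hdis i j hij hμ with h | h
  · omega
  · exact (hmain (S i) i j hij hμ h3 h2 hσ h (by omega)).elim
end

section
/- Let 𝓘 = {I_r}_{r∈Q} be a partition of the time horizon based on due dates and let σ = {σ_r}_{r∈Q} be a set of permutations consistent with the WSPT/LPT ordering rules. Then there always exists an optimal schedule without idle time, with all completion times at most T, that satisfies the ordering σ_r inside each interval on each machine except possibly for one job per machine and interval: for every r ∈ Q and machine k, every pair of jobs i ≠ j with μ(i) = μ(j) = k, C_i ∈ I_r, C_j ∈ I_r and σ_r(i) < σ_r(j) satisfies S_i < S_j, unless one of i, j is the job that completes first in I_r on machine k; moreover such an exception can occur only if that first-completing job is late in I_r (its due date is at most e_{r−1}). -/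
open Finset

lemma exists_argmin {α : Type*} (P : α → Prop) (f : α → ℕ) (h : ∃ x, P x) :
    ∃ x, P x ∧ ∀ y, P y → f x ≤ f y := by
  obtain ⟨x, hx, hm⟩ := WellFounded.has_min (measure f).wf {x | P x} h
  exact ⟨x, hx, fun y hy => not_lt.mp (hm y hy)⟩

lemma exists_lex_argmin {α : Type*} (P : α → Prop) (f g h : α → ℕ) (hP : ∃ x, P x) :
    ∃ x, P x ∧ (∀ y, P y → f x ≤ f y) ∧ (∀ y, P y → f y ≤ f x → g x ≤ g y) ∧
      (∀ y, P y → f y ≤ f x → g y ≤ g x → h x ≤ h y) := by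
  obtain ⟨a, ha, ha'⟩ := exists_argmin P f hP
  obtain ⟨b, ⟨hb, hba⟩, hb'⟩ := exists_argmin (fun x => P x ∧ f x ≤ f a) g ⟨a, ha, le_rfl⟩
  obtain ⟨c, ⟨hc, hca, hcb⟩, hc'⟩ :=
    exists_argmin (fun x => P x ∧ f x ≤ f a ∧ g x ≤ g b) h ⟨b, hb, hba, le_rfl⟩
  refine ⟨c, hc, fun y hy => hca.trans (ha' y hy), fun y hy hf => ?_, fun y hy hf hg => ?_⟩
  · exact hcb.trans (hb' y ⟨hy, hf.trans hca⟩)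
  · exact hc' y ⟨hy, hf.trans hca, hg.trans hcb⟩

/-- Separate two summands from a sum. -/
lemma sum_two_rest {n : ℕ} (a b : Fin n) (hab : a ≠ b) (f : Fin n → ℕ) :
    ∑ j, f j = f a + f b + ∑ j ∈ univ \ {a, b}, f j := by
  rw [← Finset.sum_sdiff (Finset.subset_univ {a, b}), Finset.sum_pair hab, add_comm]

/-- Start times after interchanging `b` with its immediate predecessor `a`. -/
def swapStart {n : ℕ} (p S : Fin n → ℕ) (a b : Fin n) : Fin n → ℕ :=
  fun j => if j = a then S a + p b else if j = b then S a else S j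

lemma sum_swapStart {n : ℕ} (p S : Fin n → ℕ) (a b : Fin n) (hab : a ≠ b)
    (F : Fin n → ℕ → ℕ) :
    ∃ R, ∑ j, F j (S j) = F a (S a) + F b (S b) + R ∧
      ∑ j, F j (swapStart p S a b j) = F a (S a + p b) + F b (S a) + R := by
  refine ⟨∑ j ∈ univ \ {a, b}, F j (S j), sum_two_rest a b hab _, ?_⟩
  rw [sum_two_rest a b hab]
  congr 1
  · simp [swapStart, hab.symm]
  · refine Finset.sum_congr rfl fun j hj => ?_
    simp only [mem_sdiff, mem_univ, true_and, mem_insert, mem_singleton, not_or] at hj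
    simp [swapStart, hj.1, hj.2]

/-- For any due-date-based partition `I_r = (e_{r-1}, e_r]` of the time horizon with
permutations `σ_r` consistent with the WSPT/LPT ordering rules, there exists an
optimal idle-time-free schedule with all completion times at most `T` that follows
`σ_r` within each interval on each machine, except possibly for the job completing
first in the interval on that machine; such an exception can occur only if that
first-completing job is late in the interval. -/
theorem exists_optimal_schedule_ordered_up_to_first_job
    (n m : ℕ) (hm : 1 ≤ m) (p w d : Fin n → ℕ)
    (hp : ∀ j, 0 < p j) (hw : ∀ j, 0 < w j)
    (T : ℕ) (hT : T = ((∑ j, p j) - univ.sup p + m - 1) / m + univ.sup p)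
    (q : ℕ) (e : Fin (q + 1) → ℕ) (σ : Fin q → Equiv.Perm (Fin n))
    (he0 : e 0 = 0) (heT : e (Fin.last q) = T) (hmono : StrictMono e)
    -- the partition is based on due dates
    (hdue : ∀ j, ∃ r : Fin q, d j = e r.succ)
    -- σ is consistent with the WSPT/LPT ordering rules:
    -- long jobs precede short jobs
    (hlong : ∀ (r : Fin q) (i j : Fin n),
      e r.succ - e r.castSucc ≤ p i → p j < e r.succ - e r.castSucc →
      σ r i < σ r j)
    -- a short late job precedes a short on-time job
    (hlate_ontime : ∀ (r : Fin q) (i j : Fin n),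
      p i < e r.succ - e r.castSucc → p j < e r.succ - e r.castSucc →
      d i ≤ e r.castSucc → e r.succ ≤ d j → σ r i < σ r j)
    -- short on-time jobs follow the LPT rule
    (hontime_lpt : ∀ (r : Fin q) (i j : Fin n),
      p i < e r.succ - e r.castSucc → p j < e r.succ - e r.castSucc →
      e r.succ ≤ d i → e r.succ ≤ d j → p j < p i → σ r i < σ r j)
    -- short late jobs follow the WSPT rule (pᵢ/wᵢ < pⱼ/wⱼ, cross-multiplied)
    (hlate_wspt : ∀ (r : Fin q) (i j : Fin n),
      p i < e r.succ - e r.castSucc → p j < e r.succ - e r.castSucc →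
      d i ≤ e r.castSucc → d j ≤ e r.castSucc →
      p i * w j < p j * w i → σ r i < σ r j)
    -- ties among short late jobs are broken by LPT
    (hlate_tie : ∀ (r : Fin q) (i j : Fin n),
      p i < e r.succ - e r.castSucc → p j < e r.succ - e r.castSucc →
      d i ≤ e r.castSucc → d j ≤ e r.castSucc →
      p i * w j = p j * w i → p j < p i → σ r i < σ r j) :
    ∃ (μ : Fin n → Fin m) (S : Fin n → ℕ),
      -- (μ, S) is a schedule
      (∀ i j, i ≠ j → μ i = μ j → S i + p i ≤ S j ∨ S j + p j ≤ S i) ∧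
      -- no idle time
      (∀ k : Fin m, ∀ u, u < ∑ j ∈ univ.filter (fun j => μ j = k), p j →
        ∃ j, μ j = k ∧ S j ≤ u ∧ u < S j + p j) ∧
      -- all completion times at most T
      (∀ j, S j + p j ≤ T) ∧
      -- optimality for total weighted tardiness
      (∀ (μ' : Fin n → Fin m) (S' : Fin n → ℕ),
        (∀ i j, i ≠ j → μ' i = μ' j → S' i + p i ≤ S' j ∨ S' j + p j ≤ S' i) →
        ∑ j, w j * (S j + p j - d j) ≤ ∑ j, w j * (S' j + p j - d j)) ∧
      -- σ_r is respected within each interval on each machine, except possibly when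
      -- one of the two jobs completes first in the interval on that machine, and
      -- then only if that first-completing job is late in the interval
      (∀ (r : Fin q) (k : Fin m) (i j : Fin n), i ≠ j → μ i = k → μ j = k →
        e r.castSucc < S i + p i → S i + p i ≤ e r.succ →
        e r.castSucc < S j + p j → S j + p j ≤ e r.succ →
        σ r i < σ r j →
        (S i < S j ∨
          ∃ f : Fin n, (f = i ∨ f = j) ∧ μ f = k ∧
            e r.castSucc < S f + p f ∧ S f + p f ≤ e r.succ ∧
            (∀ j' : Fin n, μ j' = k → e r.castSucc < S j' + p j' →
              S j' + p j' ≤ e r.succ → S f + p f ≤ S j' + p j') ∧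
            d f ≤ e r.castSucc)) := by
  classical
  let P : (Fin n → Fin m) × (Fin n → ℕ) → Prop := fun x =>
    ∀ i j, i ≠ j → x.1 i = x.1 j → x.2 i + p i ≤ x.2 j ∨ x.2 j + p j ≤ x.2 i
  let c : Fin n → ℕ → ℕ := fun j s => w j * (s + p j - d j)
  let g : Fin n → ℕ → ℕ := fun j s => p j * s
  let ω : Fin n → ℕ → ℕ := fun j C =>
    ∑ r : Fin q, if e r.castSucc < C ∧ C ≤ e r.succ then n - (σ r j).val else 0
  let h : Fin n → ℕ → ℕ := fun j s => p j * (ω j (s + p j) * (s + p j))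
  have hex : ∃ x, P x := by
    refine ⟨(fun _ => ⟨0, hm⟩, fun j => j.val * ∑ i, p i), ?_⟩
    have key : ∀ i j : Fin n, i.val < j.val →
        i.val * ∑ i, p i + p i ≤ j.val * ∑ i, p i := by
      intro i j hij
      have h1 : p i ≤ ∑ i, p i := Finset.single_le_sum (fun _ _ => Nat.zero_le _) (mem_univ i)
      calc i.val * ∑ i, p i + p i ≤ (i.val + 1) * ∑ i, p i := by rw [add_mul]; omega
        _ ≤ _ := Nat.mul_le_mul_right _ hij
    intro i j hij _
    rcases lt_or_gt_of_ne (fun hh => hij (Fin.ext hh) : i.val ≠ j.val) with h1 | h1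
    · exact Or.inl (key i j h1)
    · exact Or.inr (key j i h1)
  obtain ⟨⟨μ, S⟩, hS, hmin1, hmin2, hmin3⟩ := exists_lex_argmin P
    (fun x => ∑ j, c j (x.2 j)) (fun x => ∑ j, g j (x.2 j)) (fun x => ∑ j, h j (x.2 j)) hex
  simp only [P] at hS
  -- pointwise smaller start times are impossible
  have improve : ∀ (μ' : Fin n → Fin m) (S' : Fin n → ℕ), P (μ', S') →
      (∀ j, S' j ≤ S j) → ∀ j, ¬ S' j < S j := by
    intro μ' S' hP hle j hj
    have h1 : ∑ j, c j (S' j) ≤ ∑ j, c j (S j) :=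
      Finset.sum_le_sum fun i _ => Nat.mul_le_mul_left _ (by have := hle i; omega)
    have h2 : ∑ j, g j (S' j) < ∑ j, g j (S j) :=
      Finset.sum_lt_sum (fun i _ => Nat.mul_le_mul_left _ (hle i))
        ⟨j, mem_univ j, Nat.mul_lt_mul_of_pos_left hj (hp j)⟩
    exact absurd (hmin2 (μ', S') hP h1) (not_le.mpr h2)
  -- an uncovered time on a machine is followed by no job
  have noafter : ∀ (k : Fin m) (u : ℕ), (∀ j, μ j = k → S j ≤ u → S j + p j ≤ u) →
      ∀ j, μ j = k → S j + p j ≤ u := by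
    intro k u hu j hj
    by_contra hcon
    have hju : u < S j := by
      by_contra hh
      exact hcon (hu j hj (not_lt.mp hh))
    refine improve μ (fun i => if μ i = k ∧ u < S i then S i - 1 else S i) ?_ ?_ j ?_
    · intro i1 i2 hne heq
      have h0 := hS i1 i2 hne heq
      have hu1 := hu i1
      have hu2 := hu i2
      have hp1 := hp i1
      have hp2 := hp i2
      simp only at heq ⊢
      by_cases hk : μ i2 = k
      · have hk1 : μ i1 = k := heq.trans hk
        simp only [hk1, hk, true_and, forall_const] at hu1 hu2 ⊢
        split_ifs <;> omega
      · have hk1 : μ i1 ≠ k := fun hh => hk (heq ▸ hh)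
        simpa [hk1, hk] using h0
    · intro i
      split_ifs <;> omega
    · simp only [hj, hju, and_self, if_true]
      omega
  -- every time before the start of a job is covered on every machine
  have covered : ∀ (j : Fin n) (k : Fin m) (u : ℕ), u < S j →
      ∃ i, μ i = k ∧ S i ≤ u ∧ u < S i + p i := by
    intro j k u huj
    by_contra hcon
    push Not at hcon
    have hall := noafter k u hcon
    refine improve (Function.update μ j k) (Function.update S j u) ?_ ?_ j (by simpa using huj)
    · intro i1 i2 hne heq
      have h0 := hS i1 i2 hne
      simp only at heq ⊢
      by_cases h1 : i1 = j
      · subst h1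
        have h2 : i2 ≠ i1 := hne.symm
        simp only [Function.update_self, Function.update_of_ne h2] at heq ⊢
        exact Or.inr (hall i2 heq.symm)
      · by_cases h2 : i2 = j
        · subst h2
          simp only [Function.update_self, Function.update_of_ne h1] at heq ⊢
          exact Or.inl (hall i1 heq)
        · simp only [Function.update_of_ne h1, Function.update_of_ne h2] at heq ⊢
          exact h0 heq
    · intro i
      by_cases h1 : i = j
      · subst h1; simpa using huj.le
      · simp [h1]
  -- the boundary dichotomy
  have dich : ∀ (r : Fin q) (j : Fin n), d j ≤ e r.castSucc ∨ e r.succ ≤ d j := by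
    intro r j
    obtain ⟨r', hr'⟩ := hdue j
    rw [hr']
    rcases lt_or_ge r' r with hlt | hge
    · left; exact hmono.monotone (by
        rw [Fin.le_def, Fin.val_succ, Fin.val_castSucc]; exact hlt)
    · right; exact hmono.monotone (Fin.succ_le_succ_iff.mpr hge)
  have ωeq : ∀ (r : Fin q) (j : Fin n) (C : ℕ), e r.castSucc < C → C ≤ e r.succ →
      ω j C = n - (σ r j).val := by
    intro r j C h1 h2
    simp only [ω]
    rw [Finset.sum_eq_single r]
    · simp [h1, h2]
    · intro r' _ hne
      rw [if_neg]
      rintro ⟨h3, h4⟩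
      rcases lt_or_gt_of_ne hne with hlt | hlt
      · have : e r'.succ ≤ e r.castSucc := hmono.monotone (by
          rw [Fin.le_def, Fin.val_succ, Fin.val_castSucc]; exact hlt)
        omega
      · have : e r.succ ≤ e r'.castSucc := hmono.monotone (by simpa [Fin.le_def] using hlt)
        omega
    · simp
  -- validity of adjacent swaps
  have swapP : ∀ a b : Fin n, a ≠ b → μ a = μ b → S b = S a + p a →
      P (μ, swapStart p S a b) := by
    intro a b hab hμ hadj i j hij heq
    simp only at heq ⊢
    have h1 := hS i j hij heq
    have ha := fun x (hx : x ≠ a) => hS x a hx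
    have hb := fun x (hx : x ≠ b) => hS x b hx
    have hpi := hp i
    have hpj := hp j
    have hpa := hp a
    have hpb := hp b
    simp only [swapStart]
    have h3 := ha i
    have h4 := hb i
    have h5 := ha j
    have h6 := hb j
    by_cases hia : i = a
    · subst hia
      by_cases hjb : j = b
      · subst hjb; simp [hij.symm]
      · have e1 := h5 hij.symm heq.symm
        have e2 := h6 hjb (heq.symm.trans hμ)
        simp only [if_true, hij.symm, if_false, hjb]
        omega
    · by_cases hja : j = a
      · subst hja
        by_cases hib : i = b
        · subst hib; simp [hij]
        · have e1 := h3 hij heq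
          have e2 := h4 hib (heq.trans hμ)
          simp only [if_true, hij, if_false, hib]
          omega
      · by_cases hib : i = b
        · subst hib
          have e1 := h5 hja (heq.symm.trans hμ.symm)
          have e2 := h6 hij.symm heq.symm
          simp only [if_true, hij.symm, if_false, hja, hia]
          omega
        · by_cases hjb : j = b
          · subst hjb
            have e1 := h3 hia (heq.trans hμ.symm)
            have e2 := h4 hij heq
            simp only [if_true, hij, if_false, hja, hia]
            omega
          · simpa [hia, hja, hib, hjb] using h1
  -- no improving adjacent swap
  have noswap : ∀ a b : Fin n, a ≠ b → μ a = μ b → S b = S a + p a →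
      c a (S a + p b) + c b (S a) ≤ c a (S a) + c b (S b) →
      c a (S a + p b) + c b (S a) = c a (S a) + c b (S b) ∧
      h a (S a) + h b (S b) ≤ h a (S a + p b) + h b (S a) := by
    intro a b hab hμ hadj hc
    obtain ⟨R1, e1, e1'⟩ := sum_swapStart p S a b hab c
    obtain ⟨R2, e2, e2'⟩ := sum_swapStart p S a b hab g
    obtain ⟨R3, e3, e3'⟩ := sum_swapStart p S a b hab h
    have hPs := swapP a b hab hμ hadj
    have m1 := hmin1 _ hPs
    have m3 := hmin3 _ hPs
    simp only at m1 m3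
    have hg : g a (S a + p b) + g b (S a) = g a (S a) + g b (S b) := by
      simp only [g, hadj]; ring
    rw [e1, e1'] at m1
    rw [e1, e1', e2, e2', e3, e3'] at m3
    have := m3 (by omega) (by omega)
    exact ⟨by omega, by omega⟩
  have adj : ∀ (r : Fin q) (a b : Fin n), a ≠ b → μ a = μ b → S b = S a + p a →
      e r.castSucc < S a + p a → S b + p b ≤ e r.succ → σ r b < σ r a →
      (e r.castSucc < S a ∨ e r.succ ≤ d a) → False := by
    intro r a b hab hμ hadj hCa hCb hσ hor
    have hpa := hp a
    have hpb := hp b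
    have hbs : p b < e r.succ - e r.castSucc := by omega
    have has : p a < e r.succ - e r.castSucc := by
      by_contra hh
      exact absurd (hlong r a b (not_lt.mp hh) hbs) (not_lt.mpr hσ.le)
    -- the third potential strictly decreases if the completion times stay in the interval
    have hdec : e r.castSucc < S a + p b →
        h a (S a + p b) + h b (S a) < h a (S a) + h b (S b) := by
      intro hin
      simp only [h]
      rw [ωeq r a _ (by omega) (by omega), ωeq r b _ (by omega) (by omega),
        ωeq r a _ (by omega) (by omega), ωeq r b _ (by omega) (by omega), hadj]
      have h1 : n - (σ r a).val < n - (σ r b).val := by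
        have := (σ r a).isLt
        have : (σ r b).val < (σ r a).val := hσ
        omega
      have h2 : p a * p b * (n - (σ r a).val) < p a * p b * (n - (σ r b).val) :=
        Nat.mul_lt_mul_of_pos_left h1 (Nat.mul_pos hpa hpb)
      nlinarith
    rcases dich r a with hda | hda <;> rcases dich r b with hdb | hdb
    · -- both late
      have hSa : e r.castSucc < S a := by
        rcases hor with h1 | h1
        · exact h1
        · omega
      have hw' : p b * w a ≤ p a * w b := by
        by_contra hh
        exact absurd (hlate_wspt r a b has hbs hda hdb (not_le.mp hh)) (not_lt.mpr hσ.le)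
      have hc : c a (S a + p b) + c b (S a) ≤ c a (S a) + c b (S b) := by
        simp only [c]
        have e1 : S a + p b + p a - d a = (S a + p a - d a) + p b := by omega
        have e2 : S b + p b - d b = (S a + p b - d b) + p a := by omega
        rw [e1, e2, mul_add, mul_add]
        nlinarith
      have := (noswap a b hab hμ hadj hc).2
      have := hdec (by omega)
      omega
    · exact absurd (hlate_ontime r a b has hbs hda hdb) (not_lt.mpr hσ.le)
    · -- b late, a on time
      have z1 : c a (S a + p b) = 0 := by
        simp only [c]; rw [Nat.sub_eq_zero_of_le (by omega), mul_zero]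
      have z2 : c b (S a) < c b (S b) := by
        simp only [c]
        exact Nat.mul_lt_mul_of_pos_left (by omega) (hw b)
      have := (noswap a b hab hμ hadj (by omega)).1
      omega
    · -- both on time
      have hpab : p a ≤ p b := by
        by_contra hh
        exact absurd (hontime_lpt r a b has hbs hda hdb (not_le.mp hh)) (not_lt.mpr hσ.le)
      have z1 : c a (S a + p b) = 0 := by
        simp only [c]; rw [Nat.sub_eq_zero_of_le (by omega), mul_zero]
      have z2 : c b (S a) = 0 := by
        simp only [c]; rw [Nat.sub_eq_zero_of_le (by omega), mul_zero]
      have := (noswap a b hab hμ hadj (by omega)).2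
      have := hdec (by omega)
      omega
  have inv : ∀ (N : ℕ) (r : Fin q) (a b : Fin n), S b - S a ≤ N → S a < S b → μ a = μ b →
      e r.castSucc < S a + p a → S b + p b ≤ e r.succ → σ r b < σ r a →
      (e r.castSucc < S a ∨ e r.succ ≤ d a) → False := by
    intro N
    induction N with
    | zero => intro r a b h1 h2; omega
    | succ N ih =>
      intro r a b hN hlt hμ hCa hCb hσ hor
      have hab : a ≠ b := by rintro rfl; exact lt_irrefl _ hlt
      have hpa := hp a
      have hpb := hp b
      have hdis := hS a b hab hμ
      by_cases hadj : S b = S a + p a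
      · exact adj r a b hab hμ hadj hCa hCb hσ hor
      · obtain ⟨x, hxk, hx1, hx2⟩ := covered b (μ a) (S a + p a) (by omega)
        have hxa : x ≠ a := by rintro rfl; omega
        have hxb : x ≠ b := by rintro rfl; omega
        have d1 := hS x a hxa hxk
        have d2 := hS x b hxb (hxk.trans hμ)
        have hpx := hp x
        rcases lt_or_ge (σ r x) (σ r a) with hxσ | hxσ
        · exact ih r a x (by omega) (by omega) hxk.symm hCa (by omega) hxσ hor
        · exact ih r x b (by omega) (by omega) (hxk.trans hμ) (by omega) hCb
            (lt_of_lt_of_le hσ hxσ) (Or.inl (by omega))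
  refine ⟨μ, S, hS, ?_, ?_, fun μ' S' hS' => hmin1 (μ', S') hS', ?_⟩
  · -- no idle time
    intro k u hu
    by_contra hcon
    push Not at hcon
    have hall := noafter k u hcon
    have hcard : ∑ j ∈ univ.filter (fun j => μ j = k), p j =
        ((univ.filter (fun j => μ j = k)).biUnion
          (fun j => Finset.Ico (S j) (S j + p j))).card := by
      rw [Finset.card_biUnion]
      · simp
      · intro i hi j hj hij
        have hi := (Finset.mem_filter.mp hi).2
        have hj := (Finset.mem_filter.mp hj).2
        rw [Function.onFun, Finset.disjoint_left]
        intro x hx hx'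
        rw [Finset.mem_Ico] at hx hx'
        have := hS i j hij (hi.trans hj.symm)
        omega
    have hsub : ((univ.filter (fun j => μ j = k)).biUnion
          (fun j => Finset.Ico (S j) (S j + p j))) ⊆ Finset.range u := by
      intro x hx
      simp only [mem_biUnion, mem_filter, mem_univ, true_and, mem_Ico] at hx
      obtain ⟨j, hj, h1, h2⟩ := hx
      have := hall j hj
      rw [Finset.mem_range]; omega
    have := Finset.card_le_card hsub
    rw [← hcard, Finset.card_range] at this
    omega
  · -- bound by the horizon
    intro j
    have hsub : (univ : Finset (Fin m)) ×ˢ Finset.range (S j) ⊆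
        (univ.erase j).biUnion (fun i => ({μ i} : Finset (Fin m)) ×ˢ
          Finset.Ico (S i) (S i + p i)) := by
      rintro ⟨k, u⟩ hx
      simp only [mem_product, mem_univ, true_and, mem_range] at hx
      obtain ⟨i, hi, h1, h2⟩ := covered j k u hx
      simp only [mem_biUnion, mem_erase, mem_univ, and_true, mem_product, mem_singleton, mem_Ico]
      refine ⟨i, ?_, hi.symm, h1, h2⟩
      rintro rfl
      omega
    have h1 := (Finset.card_le_card hsub).trans Finset.card_biUnion_le
    simp only [card_product, card_univ, Fintype.card_fin, card_range, card_singleton,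
      Nat.card_Ico, one_mul, add_tsub_cancel_left] at h1
    have h2 : ∑ i, p i = ∑ i ∈ univ.erase j, p i + p j :=
      (Finset.sum_erase_add _ _ (mem_univ j)).symm
    have h3 : p j ≤ univ.sup p := Finset.le_sup (mem_univ j)
    generalize univ.sup p = M at *
    generalize ∑ i, p i = A at *
    generalize ∑ i ∈ univ.erase j, p i = B at *
    have h4 : A - M ≤ m * ((A - M + m - 1) / m) := by
      have := Nat.div_add_mod (A - M + m - 1) m
      have := Nat.mod_lt (A - M + m - 1) hm
      omega
    generalize (A - M + m - 1) / m = Q at *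
    by_contra hcon
    have h5 : Q + (M - p j) + 1 ≤ S j := by omega
    have h6 : m * (Q + (M - p j) + 1) ≤ m * S j := Nat.mul_le_mul_left _ h5
    have h7 : 1 * (M - p j) ≤ m * (M - p j) := Nat.mul_le_mul_right _ hm
    rw [mul_add, mul_add] at h6
    omega
  · -- ordering
    intro r k i j hij hi hj hi1 hi2 hj1 hj2 hσ
    by_contra hcon
    push Not at hcon
    obtain ⟨hle, hf⟩ := hcon
    have hpi := hp i
    have hpj := hp j
    have hdis := hS i j hij (hi.trans hj.symm)
    refine inv _ r j i le_rfl (by omega) (hj.trans hi.symm) hj1 hi2 hσ ?_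
    by_cases hfirst : ∀ j' : Fin n, μ j' = k → e r.castSucc < S j' + p j' →
              S j' + p j' ≤ e r.succ → S j + p j ≤ S j' + p j'
    · right
      have := hf j (Or.inr rfl) hj hj1 hj2 hfirst
      rcases dich r j with h1 | h1
      · omega
      · exact h1
    · left
      push Not at hfirst
      obtain ⟨x, hx, hx1, hx2, hx3⟩ := hfirst
      have hxj : x ≠ j := by rintro rfl; omega
      have := hS x j hxj (hx.trans hj.symm)
      have := hp x
      omega
end

section
/- (Proposition: the BDD-based formulation BDDF dominates the TIF.) Let B = (N, A) be a BDD-style DAG as described in the context, whose high edges e ∈ A¹ carry a job label p_B(e) ∈ J, a start period q_B(e) ∈ {1,…,T − p_{p_B(e)} + 1} and cost c_e = c̃_{p_B(e), q_B(e)}, and assume that along every directed path from the root r to the terminal 1 the occupied period sets {q_B(e), …, q_B(e) + p_{p_B(e)} − 1} of the high edges on the path are pairwise disjoint. Then every feasible solution x of the LP relaxation of the BDDF yields, via ȳ_{jt} = Σ_{e ∈ A¹ : p_B(e) = j, q_B(e) = t} x_e, a feasible solution ȳ of the LP relaxation of the TIF with the same objective value. Consequently, the optimal value of the LP relaxation of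 the BDDF is at least the optimal value of the LP relaxation of the TIF. -/
open Finset Relation

theorem bdd_extend_chain {E : Type} (R : E → E → Prop) {a b : E} (h : ReflTransGen R a b)
    (l : List E) (hl : (b :: l).IsChain R) :
    ∃ l' : List E, (a :: l').IsChain R ∧ (∀ z ∈ b :: l, z ∈ a :: l') ∧
      (a :: l').getLast (by simp) = (b :: l).getLast (by simp) := by
  induction h using ReflTransGen.head_induction_on with
  | refl => exact ⟨l, hl, fun z hz => hz, rfl⟩
  | head hac _ ih =>
    rename_i a c _
    obtain ⟨l', h1, h2, h3⟩ := ih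
    refine ⟨c :: l', List.IsChain.cons_cons hac h1, fun z hz => List.mem_cons_of_mem _ (h2 z hz), ?_⟩
    rw [List.getLast_cons (by simp)]
    exact h3

/-- The BDD-based formulation (BDDF) dominates the time-indexed formulation (TIF).
`B = (V, E)` is a BDD-style DAG (every node but the terminal `one` has exactly one
high and one low outgoing edge, `one` has no outgoing edges, `root` is the only node
without incoming edges).  High edges `e` carry a job label `job e`, a start period
`qB e ∈ {1, …, T − p (job e) + 1}` and cost `c e = ctil (job e) (qB e)`, and along
every directed root-to-terminal path the occupied period sets
`{qB e, …, qB e + p (job e) − 1}` of its high edges are pairwise disjoint.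
Then every feasible solution `x` of the LP relaxation of the BDDF yields, via
`y j t = Σ_{e high, job e = j, qB e = t} x e`, a feasible solution of the LP
relaxation of the TIF with the same objective value; consequently the optimal LP
value of the BDDF is at least that of the TIF. -/
theorem bddf_dominates_tif
    {V E : Type} [Fintype V] [Fintype E] [DecidableEq V] [DecidableEq E]
    (n T m : ℕ) (hm : 1 ≤ m)
    (p : Fin n → ℕ) (hp : ∀ j, 0 < p j) (hpT : ∀ j, p j ≤ T)
    (ctil : Fin n → ℕ → ℝ)
    (tl hd : E → V) (root one : V) (hro : root ≠ one)
    (isHigh : E → Bool) (job : E → Fin n) (qB : E → ℕ) (c : E → ℝ)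
    -- acyclicity, witnessed by a rank function
    (rank : V → ℕ) (hrank : ∀ e, rank (tl e) < rank (hd e))
    -- the terminal has no outgoing edges
    (hone : ∀ e, tl e ≠ one)
    -- every other node has exactly one high and one low outgoing edge
    (hout : ∀ v : V, v ≠ one → ∀ b : Bool, ∃! e, tl e = v ∧ isHigh e = b)
    -- the root is the only node without incoming edges
    (hroot : ∀ e, hd e ≠ root)
    (hin : ∀ v : V, v ≠ root → ∃ e, hd e = v)
    -- labels of the high edges
    (hq : ∀ e, isHigh e = true → 1 ≤ qB e ∧ qB e ≤ T - p (job e) + 1)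
    (hc : ∀ e, isHigh e = true → c e = ctil (job e) (qB e))
    -- along every root-to-terminal path, the occupied periods of the high edges
    -- are pairwise disjoint
    (hdisj : ∀ es : List E,
      (∃ h : es ≠ [], es.Chain' (fun a b => hd a = tl b) ∧
        tl (es.head h) = root ∧ hd (es.getLast h) = one) →
      ∀ e ∈ es, ∀ f ∈ es, e ≠ f → isHigh e = true → isHigh f = true →
        Disjoint (Finset.Ico (qB e) (qB e + p (job e)))
          (Finset.Ico (qB f) (qB f + p (job f))))
    -- x is a feasible solution of the LP relaxation of the BDDF
    (x : E → ℝ) (hx0 : ∀ e, 0 ≤ x e)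
    (hxassign : ∀ j : Fin n,
      ∑ e ∈ univ.filter (fun e => isHigh e = true ∧ job e = j), x e = 1)
    (hxflow : ∀ v : V, v ≠ root → v ≠ one →
      ∑ e ∈ univ.filter (fun e => tl e = v), x e =
        ∑ e ∈ univ.filter (fun e => hd e = v), x e)
    (hxm : ∑ e ∈ univ.filter (fun e => hd e = one), x e = (m : ℝ))
    -- the projected solution y
    (y : Fin n → ℕ → ℝ)
    (hy : ∀ j t, y j t =
      ∑ e ∈ univ.filter (fun e => isHigh e = true ∧ job e = j ∧ qB e = t), x e) :
    -- y is feasible for the LP relaxation of the TIF, with equal objective value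
    (∀ j t, 0 ≤ y j t) ∧
    (∀ j, ∑ t ∈ Finset.Icc 1 (T - p j + 1), y j t = 1) ∧
    (∀ t ∈ Finset.Icc 1 T,
      ∑ j, ∑ s ∈ Finset.Icc (t - p j + 1) t, y j s ≤ (m : ℝ)) ∧
    (∑ j, ∑ t ∈ Finset.Icc 1 (T - p j + 1), ctil j t * y j t =
      ∑ e ∈ univ.filter (fun e => isHigh e = true), c e * x e) := by
  have hyS : ∀ (j : Fin n) (S : Finset ℕ) (g : ℕ → ℝ), ∑ t ∈ S, g t * y j t =
      ∑ e ∈ univ.filter (fun e => isHigh e = true ∧ job e = j ∧ qB e ∈ S), g (qB e) * x e := by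
    intro j S g
    simp_rw [hy, Finset.mul_sum, Finset.sum_filter]
    rw [Finset.sum_comm]
    refine Finset.sum_congr rfl fun e _ => ?_
    by_cases h : isHigh e = true ∧ job e = j
    · simp [h.1, h.2]
    · rw [Finset.sum_eq_zero, if_neg]
      · tauto
      · intro t _
        rw [if_neg]; tauto
  have hyS1 : ∀ (j : Fin n) (S : Finset ℕ), ∑ t ∈ S, y j t =
      ∑ e ∈ univ.filter (fun e => isHigh e = true ∧ job e = j ∧ qB e ∈ S), x e := by
    intro j S
    simpa using hyS j S (fun _ => 1)
  refine ⟨?_, ?_, ?_, ?_⟩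
  · intro j t
    rw [hy]
    exact Finset.sum_nonneg fun e _ => hx0 e
  · intro j
    rw [hyS1, ← hxassign j]
    refine Finset.sum_congr ?_ fun _ _ => rfl
    ext e
    simp only [mem_filter, mem_univ, true_and, mem_Icc]
    constructor
    · tauto
    · rintro ⟨h1, h2⟩
      have := hq e h1
      rw [h2] at this
      exact ⟨h1, h2, this⟩
  · intro t ht
    classical
    let R : E → E → Prop := fun a b => hd a = tl b
    let A : E → Prop := fun e => isHigh e = true ∧ qB e ≤ t ∧ t < qB e + p (job e)
    let D : V → Prop := fun v => ∃ a, A a ∧ ∃ e, ReflTransGen R a e ∧ hd e = v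
    have hfromroot : ∀ k : ℕ, ∀ a : E, rank (tl a) ≤ k →
        ∃ e0, tl e0 = root ∧ ReflTransGen R e0 a := by
      intro k
      induction k with
      | zero =>
        intro a ha
        by_cases h : tl a = root
        · exact ⟨a, h, .refl⟩
        · obtain ⟨e, he⟩ := hin _ h
          have := hrank e
          rw [he] at this
          omega
      | succ k ih =>
        intro a ha
        by_cases h : tl a = root
        · exact ⟨a, h, .refl⟩
        · obtain ⟨e, he⟩ := hin _ h
          have := hrank e
          rw [he] at this
          obtain ⟨e0, h0, h1⟩ := ih e (by omega)
          exact ⟨e0, h0, h1.tail he⟩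
    have htoone : ∀ k : ℕ, ∀ a : E, (univ.sup rank) - rank (hd a) ≤ k →
        ∃ e1, hd e1 = one ∧ ReflTransGen R a e1 := by
      intro k
      induction k with
      | zero =>
        intro a ha
        by_cases h : hd a = one
        · exact ⟨a, h, .refl⟩
        · obtain ⟨e, ⟨he, _⟩, _⟩ := hout _ h true
          have := hrank e
          rw [he] at this
          have h2 : rank (hd e) ≤ univ.sup rank := Finset.le_sup (mem_univ _)
          omega
      | succ k ih =>
        intro a ha
        by_cases h : hd a = one
        · exact ⟨a, h, .refl⟩
        · obtain ⟨e, ⟨he, _⟩, _⟩ := hout _ h true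
          have := hrank e
          rw [he] at this
          have h2 : rank (hd e) ≤ univ.sup rank := Finset.le_sup (mem_univ _)
          obtain ⟨e0, h0, h1⟩ := ih e (by omega)
          exact ⟨e0, h0, .head he.symm h1⟩
    have hrankR : ∀ a e, ReflTransGen R a e → rank (tl a) < rank (hd e) := by
      intro a e h
      induction h with
      | refl => exact hrank a
      | tail _ h2 ih =>
        rename_i b c _
        have h3 : hd b = tl c := h2
        have := hrank c
        rw [h3] at ih
        omega
    have hDroot : ¬ D root := by
      rintro ⟨a, _, e, _, he⟩
      exact hroot e he
    have hDclosed : ∀ e, D (tl e) → D (hd e) := by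
      rintro e ⟨a, ha, e', h1, h2⟩
      exact ⟨a, ha, e, h1.tail h2, rfl⟩
    have hAhd : ∀ a, A a → D (hd a) := fun a ha => ⟨a, ha, a, .refl, rfl⟩
    have hAtl : ∀ a, A a → ¬ D (tl a) := by
      rintro a ha ⟨a', ha', e, h1, h2⟩
      have h3 : ReflTransGen R a' a := h1.tail h2
      have hne : a' ≠ a := by
        rintro rfl
        have := hrankR _ _ h1
        rw [h2] at this
        omega
      obtain ⟨e1, he1, hr1⟩ := htoone _ a le_rfl
      obtain ⟨e0, he0, hr0⟩ := hfromroot _ a' le_rfl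
      obtain ⟨l1, c1, m1, g1⟩ := bdd_extend_chain R hr1 [] (by simp)
      obtain ⟨l2, c2, m2, g2⟩ := bdd_extend_chain R h3 l1 c1
      obtain ⟨l3, c3, m3, g3⟩ := bdd_extend_chain R hr0 l2 c2
      have := hdisj (e0 :: l3) ⟨by simp, c3, by simpa using he0, by
        rw [g3, g2, g1]; simpa using he1⟩ a' (m3 _ (by simp)) a
        (m3 _ (m2 _ (by simp))) hne ha'.1 ha.1
      rw [Finset.disjoint_left] at this
      exact this (Finset.mem_Ico.2 ha'.2) (Finset.mem_Ico.2 ha.2)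
    -- left-hand side is at most the flow through `A`
    have hL : ∑ j, ∑ s ∈ Finset.Icc (t - p j + 1) t, y j s =
        ∑ e ∈ univ.filter A, x e := by
      simp_rw [hyS1, Finset.sum_filter]
      rw [Finset.sum_comm]
      refine Finset.sum_congr rfl fun e _ => ?_
      rw [Finset.sum_eq_single (job e)]
      · refine if_congr ?_ rfl rfl
        simp only [A, mem_Icc, true_and]
        have := hp (job e)
        constructor
        · rintro ⟨h1, h2⟩
          exact ⟨h1, by omega, by omega⟩
        · rintro ⟨h1, h2⟩
          have := hq e h1
          exact ⟨h1, by omega, by omega⟩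
      · intro j _ hj
        rw [if_neg]
        rintro ⟨_, h, _⟩
        exact hj h.symm
      · simp
    rw [hL]
    have hfib : ∀ g : E → V, ∑ e ∈ univ.filter (fun e => D (g e)), x e =
        ∑ v ∈ univ.filter D, ∑ e ∈ univ.filter (fun e => g e = v), x e := by
      intro g
      rw [← Finset.sum_fiberwise_of_maps_to (t := univ.filter D) (g := g)
        (fun e he => by simpa using he)]
      refine Finset.sum_congr rfl fun v hv => Finset.sum_congr ?_ fun _ _ => rfl
      ext e
      simp only [mem_filter, mem_univ, true_and] at hv ⊢
      exact ⟨fun h => h.2, fun h => ⟨h ▸ hv, h⟩⟩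
    have hcut : ∑ e ∈ univ.filter (fun e => D (hd e)), x e ≤
        ∑ e ∈ univ.filter (fun e => D (tl e)), x e + m := by
      rw [hfib, hfib]
      have : (m : ℝ) = ∑ v ∈ (univ : Finset V), if v = one then (m : ℝ) else 0 := by simp
      have h2 : ∑ v ∈ univ.filter D, (if v = one then (m : ℝ) else 0) ≤ m := by
        conv_rhs => rw [this]
        refine Finset.sum_le_sum_of_subset_of_nonneg (Finset.subset_univ _) fun v _ _ => ?_
        split_ifs <;> simp
      refine le_trans ?_ (add_le_add_right h2 _)
      rw [← Finset.sum_add_distrib]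
      refine Finset.sum_le_sum fun v hv => ?_
      have hvr : v ≠ root := by
        rintro rfl
        exact hDroot (Finset.mem_filter.1 hv).2
      by_cases h : v = one
      · subst h
        rw [hxm, if_pos rfl]
        have := Finset.sum_nonneg (s := univ.filter (fun e => tl e = v)) fun e _ => hx0 e
        linarith
      · rw [hxflow v hvr h, if_neg h, add_zero]
    have hsplit : ∑ e ∈ univ.filter A, x e + ∑ e ∈ univ.filter (fun e => D (tl e)), x e ≤
        ∑ e ∈ univ.filter (fun e => D (hd e)), x e := by
      rw [← Finset.sum_union]
      · refine Finset.sum_le_sum_of_subset_of_nonneg ?_ fun e _ _ => hx0 e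
        intro e he
        simp only [mem_union, mem_filter, mem_univ, true_and] at he ⊢
        exact he.elim (hAhd e) (hDclosed e)
      · rw [Finset.disjoint_left]
        intro e he
        simp only [mem_filter, mem_univ, true_and] at he ⊢
        exact hAtl e he
    linarith
  · simp_rw [hyS, Finset.sum_filter]
    rw [Finset.sum_comm]
    refine Finset.sum_congr rfl fun e _ => ?_
    rw [Finset.sum_eq_single (job e)]
    · by_cases h : isHigh e = true
      · have := hq e h
        simp [h, this, hc e h]
      · simp [h]
    · intro j _ hj
      rw [if_neg]
      rintro ⟨_, h, _⟩
      exact hj h.symm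
    · simp
end

section
/- (The ATIF dominates the TIF.) Let x be any feasible solution of the LP relaxation of the arc-time-indexed formulation (ATIF). Define ȳ_{jt} = Σ_{i ∈ J₊ \ {j}} x_{ij}^{t−1} for every j ∈ J and t ∈ {1,…,T − p_j + 1}. Then ȳ is a feasible solution of the LP relaxation of the time-indexed formulation (TIF), and if the costs are related by c̄_{jt} = c̃_{j,t+1}, the objective value of ȳ in the TIF equals the objective value of x in the ATIF. Consequently, the optimal value of the LP relaxation of the ATIF is at least the optimal value of the LP relaxation of the TIF. -/
open Finset

/-- The arc-time-indexed formulation (ATIF) dominates the time-indexed formulation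
(TIF).  Jobs are `1, …, n` (the nonzero elements of `Fin (n+1)`), `0` is the idle
job with `p 0 = 0`.  Let `x` be any feasible solution of the LP relaxation of the
ATIF (with variables supported on their defined index ranges).  Then
`y j t = Σ_{i ≠ j} x i j (t−1)` is a feasible solution of the LP relaxation of the
TIF, and if the costs are related by `cbar j t = ctil j (t+1)`, the objective value
of `y` in the TIF equals the objective value of `x` in the ATIF; consequently the
optimal LP value of the ATIF is at least that of the TIF. -/
theorem atif_dominates_tif
    (n T m : ℕ) (hm : 1 ≤ m)
    (p : Fin (n + 1) → ℕ) (hp0 : p 0 = 0)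
    (hp : ∀ j : Fin (n + 1), j ≠ 0 → 0 < p j) (hpT : ∀ j, p j ≤ T)
    (ctil cbar : Fin (n + 1) → ℕ → ℝ)
    -- cost relation: cbar j t = ctil j (t+1)
    (hcost : ∀ j t, cbar j t = ctil j (t + 1))
    (x : Fin (n + 1) → Fin (n + 1) → ℕ → ℝ)
    (hx0 : ∀ i j t, 0 ≤ x i j t)
    -- x is supported on the defined variable ranges: x i j t exists only for
    -- i ≠ j with t ∈ {p i, …, T − p j}, or i = j = 0 with t ∈ {0, …, T − 1}
    (hdom : ∀ i j t, x i j t ≠ 0 →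
      ((i ≠ j ∧ p i ≤ t ∧ t + p j ≤ T) ∨ (i = 0 ∧ j = 0 ∧ t + 1 ≤ T)))
    -- assignment constraints
    (hassign : ∀ j : Fin (n + 1), j ≠ 0 →
      ∑ i ∈ univ.filter (fun i => i ≠ j),
        ∑ t ∈ Finset.Icc (p i) (T - p j), x i j t = 1)
    -- flow conservation for each job i ≠ 0 and each t ∈ {0, …, T − p i}
    (hflow : ∀ i : Fin (n + 1), i ≠ 0 → ∀ t, t ≤ T - p i →
      ∑ j ∈ univ.filter (fun j => j ≠ i ∧ p j ≤ t), x j i t =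
        ∑ j ∈ univ.filter (fun j => j ≠ i ∧ t + p i + p j ≤ T), x i j (t + p i))
    -- idle-time flow conservation for each t ∈ {0, …, T − 1}
    (hidle : ∀ t, t + 1 ≤ T →
      ∑ j ∈ univ.filter (fun j => p j ≤ t), x j 0 t =
        ∑ j ∈ univ.filter (fun j => t + p j + 1 ≤ T), x 0 j (t + 1))
    -- m machines leave the source
    (hcap : ∑ j, x 0 j 0 = (m : ℝ))
    -- the projected solution y
    (y : Fin (n + 1) → ℕ → ℝ)
    (hy : ∀ j t, y j t = ∑ i ∈ univ.filter (fun i => i ≠ j), x i j (t - 1)) :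
    -- y is feasible for the LP relaxation of the TIF, with equal objective value
    (∀ j t, 0 ≤ y j t) ∧
    (∀ j : Fin (n + 1), j ≠ 0 →
      ∑ t ∈ Finset.Icc 1 (T - p j + 1), y j t = 1) ∧
    (∀ t ∈ Finset.Icc 1 T,
      ∑ j ∈ univ.filter (fun j : Fin (n + 1) => j ≠ 0),
        ∑ s ∈ Finset.Icc (t - p j + 1) t, y j s ≤ (m : ℝ)) ∧
    (∑ j ∈ univ.filter (fun j : Fin (n + 1) => j ≠ 0),
        ∑ t ∈ Finset.Icc 1 (T - p j + 1), ctil j t * y j t =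
      ∑ i : Fin (n + 1), ∑ j ∈ univ.filter (fun j => j ≠ i ∧ j ≠ 0),
        ∑ t ∈ Finset.Icc (p i) (T - p j), cbar j t * x i j t) := by
  -- weighted sums of `y` in terms of `x`
  have key : ∀ (c : ℕ → ℝ) (j : Fin (n + 1)), j ≠ 0 →
      ∑ t ∈ Finset.Icc 1 (T - p j + 1), c t * y j t =
        ∑ i ∈ univ.filter (fun i => i ≠ j),
          ∑ t ∈ Finset.Icc (p i) (T - p j), c (t + 1) * x i j t := by
    intro c j hj
    have h1 : ∑ t ∈ Finset.Icc 1 (T - p j + 1), c t * y j t =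
        ∑ t ∈ Finset.range (T - p j + 1), c (t + 1) * y j (t + 1) := by
      rw [Finset.range_eq_Ico, Finset.sum_Ico_add' (fun t => c t * y j t) 0 (T - p j + 1) 1]
      rfl
    rw [h1]
    simp only [hy, Nat.add_sub_cancel, Finset.mul_sum]
    rw [Finset.sum_comm]
    refine Finset.sum_congr rfl fun i hi => ?_
    have hij : i ≠ j := by simpa using hi
    symm
    refine Finset.sum_subset ?_ ?_
    · intro t ht
      simp only [Finset.mem_Icc, Finset.mem_range] at *
      omega
    · intro t ht hnt
      have : x i j t = 0 := by
        by_contra h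
        simp only [Finset.mem_Icc, Finset.mem_range] at *
        rcases hdom i j t h with ⟨_, h1, h2⟩ | ⟨_, h2, _⟩
        · omega
        · exact hj h2
      rw [this, mul_zero]
  have hxdiag : ∀ i t, i ≠ 0 → x i i t = 0 := by
    intro i t hi
    by_contra h
    rcases hdom i i t h with ⟨h1, _⟩ | ⟨h1, _⟩
    · exact h1 rfl
    · exact hi h1
  have hlow : ∀ i j t, t < p i → x i j t = 0 := by
    intro i j t ht
    by_contra h
    rcases hdom i j t h with ⟨_, h1, _⟩ | ⟨h1, _⟩
    · omega
    · subst h1; omega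
  have hhigh : ∀ i j t, T < t + p j → x i j t = 0 := by
    intro i j t ht
    by_contra h
    rcases hdom i j t h with ⟨_, _, h1⟩ | ⟨_, h1, _⟩
    · omega
    · subst h1; omega
  have hyin : ∀ j t, j ≠ 0 → y j (t + 1) = ∑ i, x i j t := by
    intro j t hj
    rw [hy, Nat.add_sub_cancel]
    refine Finset.sum_subset (Finset.subset_univ _) ?_
    intro i _ hi
    have : i = j := by simpa using hi
    subst this
    exact hxdiag i t hj
  have hflow' : ∀ i, i ≠ 0 → ∀ t, t ≤ T - p i → y i (t + 1) = ∑ j, x i j (t + p i) := by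
    intro i hi t ht
    rw [hyin i t hi]
    have h := hflow i hi t ht
    refine Eq.trans (Eq.symm (Finset.sum_subset (Finset.subset_univ _) ?_))
      (h.trans (Finset.sum_subset (Finset.subset_univ _) ?_))
    rotate_left
    · intro j _ hj
      simp only [Finset.mem_filter, Finset.mem_univ, true_and, not_and] at hj
      by_cases hji : j = i
      · subst hji; exact hxdiag j _ hi
      · have := hj hji
        exact hhigh _ _ _ (by omega)
    · intro j _ hj
      simp only [Finset.mem_filter, Finset.mem_univ, true_and, not_and] at hj
      by_cases hji : j = i
      · subst hji; exact hxdiag j _ hi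
      · have := hj hji
        exact hlow _ _ _ (by omega)
  have hidle' : ∀ t, t + 1 ≤ T → ∑ j, x j 0 t = ∑ j, x 0 j (t + 1) := by
    intro t ht
    have h := hidle t ht
    refine Eq.trans (Eq.symm (Finset.sum_subset (Finset.subset_univ _) ?_))
      (h.trans (Finset.sum_subset (Finset.subset_univ _) ?_))
    rotate_left
    · intro j _ hj
      simp only [Finset.mem_filter, Finset.mem_univ, true_and] at hj
      exact hhigh _ _ _ (by omega)
    · intro j _ hj
      simp only [Finset.mem_filter, Finset.mem_univ, true_and] at hj
      exact hlow _ _ _ (by omega)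
  have hsplit : ∀ f : Fin (n + 1) → ℝ,
      ∑ j, f j = f 0 + ∑ j ∈ univ.filter (fun j : Fin (n + 1) => j ≠ 0), f j := by
    intro f
    rw [Finset.filter_ne', Finset.add_sum_erase _ _ (Finset.mem_univ _)]
  have hbal : ∀ t, ∑ i, x i 0 t + ∑ j ∈ univ.filter (fun j : Fin (n + 1) => j ≠ 0), y j (t + 1)
      = ∑ j, x 0 j t + ∑ i ∈ univ.filter (fun i : Fin (n + 1) => i ≠ 0), ∑ j, x i j t := by
    intro t
    rw [← hsplit (fun i => ∑ j, x i j t), Finset.sum_comm, hsplit (fun j => ∑ i, x i j t)]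
    congr 1
    refine Finset.sum_congr rfl fun j hj => hyin j t ?_
    simpa using hj
  -- conservation of the number of machines
  have hinv : ∀ t, t + 1 ≤ T → ∑ i, x i 0 t +
      ∑ j ∈ univ.filter (fun j : Fin (n + 1) => j ≠ 0),
        (∑ s ∈ Finset.range (t + 1), y j (s + 1) -
          ∑ s ∈ Finset.range (t + 1 - p j), y j (s + 1)) = (m : ℝ) := by
    intro t
    induction t with
    | zero =>
      intro _
      have hb := hbal 0
      rw [hcap] at hb
      have hz : ∑ i ∈ univ.filter (fun i : Fin (n + 1) => i ≠ 0), ∑ j, x i j 0 = 0 := by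
        refine Finset.sum_eq_zero fun i hi => Finset.sum_eq_zero fun j _ => hlow _ _ _ ?_
        exact hp i (by simpa using hi)
      rw [hz, add_zero] at hb
      rw [← hb]
      congr 1
      refine Finset.sum_congr rfl fun j hj => ?_
      have := hp j (by simpa using hj)
      have h0 : 0 + 1 - p j = 0 := by omega
      rw [h0]
      simp
    | succ t ih =>
      intro ht
      have ih := ih (by omega)
      have hb := hbal (t + 1)
      have hi := hidle' t (by omega)
      have hs : ∑ j ∈ univ.filter (fun j : Fin (n + 1) => j ≠ 0),
          (∑ s ∈ Finset.range (t + 1 + 1), y j (s + 1) -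
            ∑ s ∈ Finset.range (t + 1 + 1 - p j), y j (s + 1)) =
          ∑ j ∈ univ.filter (fun j : Fin (n + 1) => j ≠ 0),
          (∑ s ∈ Finset.range (t + 1), y j (s + 1) -
            ∑ s ∈ Finset.range (t + 1 - p j), y j (s + 1)) +
          ∑ j ∈ univ.filter (fun j : Fin (n + 1) => j ≠ 0), y j (t + 1 + 1) -
          ∑ i ∈ univ.filter (fun i : Fin (n + 1) => i ≠ 0), ∑ j, x i j (t + 1) := by
        rw [← Finset.sum_add_distrib, ← Finset.sum_sub_distrib]
        refine Finset.sum_congr rfl fun j hj => ?_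
        have hj : j ≠ 0 := by simpa using hj
        rw [Finset.sum_range_succ _ (t + 1)]
        by_cases hc : t + 1 < p j
        · have h1 : t + 1 + 1 - p j = 0 := by omega
          have h2 : t + 1 - p j = 0 := by omega
          have h3 : ∑ k, x j k (t + 1) = 0 := Finset.sum_eq_zero fun k _ => hlow _ _ _ hc
          rw [h1, h2, h3]
          ring
        · have h1 : t + 1 + 1 - p j = (t + 1 - p j) + 1 := by omega
          have h3 := hflow' j hj (t + 1 - p j) (by omega)
          rw [Nat.sub_add_cancel (by omega)] at h3
          rw [h1, Finset.sum_range_succ _ (t + 1 - p j), h3]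
          ring
      rw [hs]
      linarith
  refine ⟨?_, ?_, ?_, ?_⟩
  · intro j t
    rw [hy]
    exact Finset.sum_nonneg fun i _ => hx0 _ _ _
  · intro j hj
    have h := key (fun _ => 1) j hj
    simp only [one_mul] at h
    rw [h, hassign j hj]
  · intro t ht
    rw [Finset.mem_Icc] at ht
    obtain ⟨u, rfl⟩ : ∃ u, t = u + 1 := ⟨t - 1, by omega⟩
    have h := hinv u ht.2
    have hz : 0 ≤ ∑ i, x i 0 u := Finset.sum_nonneg fun i _ => hx0 _ _ _
    have he : ∑ j ∈ univ.filter (fun j : Fin (n + 1) => j ≠ 0),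
        ∑ s ∈ Finset.Icc (u + 1 - p j + 1) (u + 1), y j s =
        ∑ j ∈ univ.filter (fun j : Fin (n + 1) => j ≠ 0),
        (∑ s ∈ Finset.range (u + 1), y j (s + 1) -
          ∑ s ∈ Finset.range (u + 1 - p j), y j (s + 1)) := by
      refine Finset.sum_congr rfl fun j _ => ?_
      rw [← Finset.sum_Ico_eq_sub _ (by omega : u + 1 - p j ≤ u + 1),
        Finset.sum_Ico_add' (fun s => y j s)]
      rfl
    rw [he]
    linarith
  · rw [Finset.sum_congr rfl fun j hj => key (ctil j) j (by simpa using hj)]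
    simp only [hcost]
    refine Finset.sum_comm' ?_
    intro j i
    simp only [Finset.mem_filter, Finset.mem_univ, true_and, and_true]
    constructor
    · rintro ⟨a, b⟩; exact ⟨fun h => b h.symm, a⟩
    · rintro ⟨a, b⟩; exact ⟨b, fun h => a h.symm⟩
end

section
/- Let G = (V, E) be a finite directed acyclic graph with two distinct nodes r and s such that r has no incoming edges and s has no outgoing edges. Let P ⊆ ℝ^E be the polytope of all x with x_e ≥ 0 for every e ∈ E, flow conservation at every node v ∉ {r, s} (the sum of x over incoming edges of v equals the sum over outgoing edges of v), and total outflow of r equal to 1. Then a point x ∈ P is an extreme point of P if and only if x is the 0/1 incidence vector of the edge set of a directed path from r to s. -/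
open Finset

/-- `IsPath tl hd r s es`: the nonempty list of edges `es` forms a directed path from
`r` to `s` in the graph whose edges `e` go from `tl e` to `hd e`. -/
def IsPath {E V : Type} (tl hd : E → V) (r s : V) (es : List E) : Prop :=
  ∃ h : es ≠ [], es.Chain' (fun a b => hd a = tl b) ∧
    tl (es.head h) = r ∧ hd (es.getLast h) = s


/-- recursive walks from `u` to `s`. -/
def FWalk {E V : Type} (tl hd : E → V) (s : V) : V → List E → Prop
  | u, [] => u = s
  | u, e :: t => tl e = u ∧ FWalk tl hd s (hd e) t

/-- net outflow -/
noncomputable def netOut {E V : Type} [Fintype E] [DecidableEq V] (tl hd : E → V)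
    (x : E → ℝ) (v : V) : ℝ :=
  ∑ e, x e * ((if tl e = v then 1 else 0) - (if hd e = v then 1 else 0))

/-- incidence vector -/
noncomputable def inc {E : Type} [DecidableEq E] (es : List E) : E → ℝ :=
  fun e => if e ∈ es then 1 else 0

section helpers
variable {V E : Type} [Fintype E] [DecidableEq V] [DecidableEq E]

lemma isPath_iff_fwalk (tl hd : E → V) (s : V) (es : List E) (h : es ≠ []) (r : V) :
    IsPath tl hd r s es ↔ FWalk tl hd s r es := by
  induction es generalizing r with
  | nil => exact absurd rfl h
  | cons e t ih =>
    cases t with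
    | nil => simp [IsPath, FWalk, List.Chain']
    | cons e' t =>
      have := ih (by simp) (hd e)
      simp only [FWalk] at this ⊢
      rw [← this]
      simp [IsPath, List.Chain']
      grind

lemma fwalk_rank (tl hd : E → V) (s : V) (rank : V → ℕ)
    (hrank : ∀ e, rank (tl e) < rank (hd e)) (es : List E) (u : V)
    (h : FWalk tl hd s u es) : ∀ e ∈ es, rank u ≤ rank (tl e) := by
  induction es generalizing u with
  | nil => simp
  | cons e t ih =>
    obtain ⟨rfl, h2⟩ := h
    intro e' he'
    rcases List.mem_cons.1 he' with rfl | h3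
    · exact le_rfl
    · exact (hrank e).le.trans (ih _ h2 e' h3)

lemma netOut_comb (tl hd : E → V) (a b : ℝ) (x y : E → ℝ) (v : V) :
    netOut tl hd (fun e => a * x e + b * y e) v = a * netOut tl hd x v + b * netOut tl hd y v := by
  simp only [netOut, Finset.mul_sum, ← Finset.sum_add_distrib]
  exact Finset.sum_congr rfl fun e _ => by ring

lemma netOut_inc (tl hd : E → V) (s : V) (rank : V → ℕ)
    (hrank : ∀ e, rank (tl e) < rank (hd e)) (es : List E) (u : V)
    (h : FWalk tl hd s u es) (v : V) :
    netOut tl hd (inc es) v = (if u = v then 1 else 0) - (if s = v then 1 else 0) := by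
  induction es generalizing u with
  | nil =>
    have : u = s := h
    subst this
    simp [netOut, inc]
  | cons e t ih =>
    obtain ⟨rfl, h2⟩ := h
    have hn : e ∉ t := fun he => by
      have := fwalk_rank tl hd s rank hrank t _ h2 e he
      have := hrank e
      omega
    have h3 : inc (e :: t) = fun e' => 1 * (if e' = e then (1:ℝ) else 0) + 1 * inc t e' := by
      funext e'
      by_cases h4 : e' = e
      · subst h4; simp [inc, hn]
      · simp [inc, h4]
    rw [h3, netOut_comb, ih _ h2]
    simp [netOut]

lemma supp_zero (tl hd : E → V) (s : V) (hs : ∀ e, tl e ≠ s) (rank : V → ℕ)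
    (hrank : ∀ e, rank (tl e) < rank (hd e)) (es : List E) (u : V)
    (h : FWalk tl hd s u es) (d : E → ℝ) (hd0 : ∀ v, v ≠ s → netOut tl hd d v = 0)
    (hsupp : ∀ e, e ∉ es → d e = 0) : d = 0 := by
  induction es generalizing u with
  | nil => funext e; exact hsupp e (by simp)
  | cons e t ih =>
    obtain ⟨rfl, h2⟩ := h
    refine ih _ h2 fun e' he' => ?_
    by_cases h4 : e' = e
    · subst h4
      have h5 := hd0 (tl e') (hs e')
      unfold netOut at h5
      rw [Finset.sum_eq_single e'] at h5
      · have : hd e' ≠ tl e' := fun h => by have := hrank e'; rw [h] at this; omega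
        simpa [this] using h5
      · intro b _ hb
        by_cases hbt : b ∈ t
        · have h6 := fwalk_rank tl hd s rank hrank t _ h2 b hbt
          have h7 := hrank b
          have h8 := hrank e'
          have h9 : tl b ≠ tl e' := fun h => by rw [h] at h6; omega
          have h10 : hd b ≠ tl e' := fun h => by rw [h] at h7; omega
          simp [h9, h10]
        · rw [hsupp b (by simp [hb, hbt])]; simp
      · simp
    · exact hsupp e' (by simp [h4, he'])

lemma exists_fwalk [Fintype V] (tl hd : E → V) (s : V) (rank : V → ℕ)
    (hrank : ∀ e, rank (tl e) < rank (hd e)) (x : E → ℝ) (hx : ∀ e, 0 ≤ x e)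
    (hx0 : ∀ v, v ≠ s → 0 ≤ netOut tl hd x v) (n : ℕ) (u : V)
    (hn : Finset.univ.sup rank ≤ rank u + n)
    (hu : 0 < netOut tl hd x u ∨ ∃ e, hd e = u ∧ 0 < x e) :
    ∃ es, FWalk tl hd s u es ∧ ∀ e ∈ es, 0 < x e := by
  by_cases hus : u = s
  · exact ⟨[], hus, by simp⟩
  have hout : ∃ e, tl e = u ∧ 0 < x e := by
    by_contra! hc
    have hz : ∀ e, x e * ((if tl e = u then 1 else 0) - (if hd e = u then 1 else 0)) ≤ 0 := by
      intro e
      have h1 := hx e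
      by_cases h2 : tl e = u
      · have := le_antisymm (hc e h2) h1
        simp [this]
      · by_cases h3 : hd e = u <;> simp [h2, h3, h1]
    rcases hu with hu | ⟨e, rfl, he⟩
    · exact absurd (Finset.sum_nonpos fun e _ => hz e) (not_le.2 hu)
    · have h4 : netOut tl hd x (hd e) < 0 := by
        refine Finset.sum_neg' (fun e _ => hz e) ⟨e, Finset.mem_univ _, ?_⟩
        have : tl e ≠ hd e := fun h => by have := hrank e; rw [h] at this; omega
        simp [this, he]
      exact absurd (hx0 _ hus) (not_le.2 h4)
  obtain ⟨e, rfl, he⟩ := hout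
  have h1 := hrank e
  have h2 : rank (hd e) ≤ Finset.univ.sup rank := Finset.le_sup (Finset.mem_univ _)
  cases n with
  | zero => omega
  | succ n =>
    obtain ⟨es, h3, h4⟩ := exists_fwalk tl hd s rank hrank x hx hx0 n (hd e) (by omega)
      (Or.inr ⟨e, rfl, he⟩)
    exact ⟨e :: es, ⟨rfl, h3⟩, by simpa using ⟨he, h4⟩⟩

lemma exists_small (x : E → ℝ) (es : List E) (h : ∀ e ∈ es, 0 < x e) :
    ∃ δ : ℝ, 0 < δ ∧ δ ≤ 1 ∧ ∀ e ∈ es, δ ≤ x e := by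
  induction es with
  | nil => exact ⟨1, by norm_num, le_rfl, by simp⟩
  | cons e t ih =>
    obtain ⟨δ, h1, h2, h3⟩ := ih fun e he => h e (by simp [he])
    refine ⟨min δ (x e), lt_min h1 (h e (by simp)), (min_le_left _ _).trans h2, ?_⟩
    intro e' he'
    rcases List.mem_cons.1 he' with rfl | h4
    · exact min_le_right _ _
    · exact (min_le_left _ _).trans (h3 _ h4)

lemma mem_P_iff (tl hd : E → V) (r s : V) (hrs : r ≠ s) (hr : ∀ e, hd e ≠ r) (x : E → ℝ) :
    x ∈ {x : E → ℝ | (∀ e, 0 ≤ x e) ∧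
      (∀ v, v ≠ r → v ≠ s →
        ∑ e ∈ univ.filter (fun e => hd e = v), x e =
          ∑ e ∈ univ.filter (fun e => tl e = v), x e) ∧
      ∑ e ∈ univ.filter (fun e => tl e = r), x e = 1} ↔
    (∀ e, 0 ≤ x e) ∧ ∀ v, v ≠ s → netOut tl hd x v = if r = v then 1 else 0 := by
  have key : ∀ v, netOut tl hd x v = ∑ e ∈ univ.filter (fun e => tl e = v), x e -
      ∑ e ∈ univ.filter (fun e => hd e = v), x e := by
    intro v
    simp [netOut, mul_sub, Finset.sum_filter]
  have h0 : ∑ e ∈ univ.filter (fun e => hd e = r), x e = 0 := by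
    simp [hr]
  simp only [Set.mem_setOf_eq, key]
  refine and_congr_right fun _ => ⟨?_, ?_⟩
  · rintro ⟨h1, h2⟩ v hv
    by_cases h : r = v
    · subst h; simp [h0, h2]
    · simp [h, h1 v (Ne.symm h) hv]
  · intro h
    refine ⟨fun v h1 h2 => ?_, ?_⟩
    · have := h v h2
      rw [if_neg (Ne.symm h1)] at this
      linarith
    · have := h r hrs
      rw [h0] at this
      simpa using this

end helpers

/-- In a finite DAG with source `r` (no incoming edges) and sink `s` (no outgoing
edges), a point of the unit-flow polytope `P` (nonnegative flows with conservation
outside `{r, s}` and total outflow `1` at `r`) is an extreme point of `P` if and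
only if it is the 0/1 incidence vector of a directed path from `r` to `s`. -/
theorem extremePoints_unit_flow_polytope_iff_path
    {V E : Type} [Fintype V] [Fintype E] [DecidableEq V] [DecidableEq E]
    (tl hd : E → V) (r s : V) (hrs : r ≠ s)
    (hr : ∀ e, hd e ≠ r) (hs : ∀ e, tl e ≠ s)
    -- acyclicity, witnessed by a rank function
    (rank : V → ℕ) (hrank : ∀ e, rank (tl e) < rank (hd e))
    (P : Set (E → ℝ))
    (hP : P = {x | (∀ e, 0 ≤ x e) ∧
      (∀ v, v ≠ r → v ≠ s →
        ∑ e ∈ univ.filter (fun e => hd e = v), x e =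
          ∑ e ∈ univ.filter (fun e => tl e = v), x e) ∧
      ∑ e ∈ univ.filter (fun e => tl e = r), x e = 1})
    (x : E → ℝ) :
    x ∈ P.extremePoints ℝ ↔
      ∃ es : List E, IsPath tl hd r s es ∧
        x = fun e => if e ∈ es then 1 else 0 := by
  have hPm : ∀ y, y ∈ P ↔ (∀ e, 0 ≤ y e) ∧
      ∀ v, v ≠ s → netOut tl hd y v = if r = v then 1 else 0 := by
    intro y; rw [hP]; exact mem_P_iff tl hd r s hrs hr y
  have hinc : ∀ es, FWalk tl hd s r es → ∀ v, v ≠ s →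
      netOut tl hd (inc es) v = if r = v then 1 else 0 := by
    intro es h v hv
    rw [netOut_inc tl hd s rank hrank es r h v]
    simp [Ne.symm hv]
  have hne : ∀ es, FWalk tl hd s r es → es ≠ [] := by
    rintro es h rfl
    exact hrs h
  rw [mem_extremePoints]
  constructor
  · rintro ⟨hx, hext⟩
    obtain ⟨hx1, hx2⟩ := (hPm x).1 hx
    obtain ⟨es, hes, hpos⟩ := exists_fwalk tl hd s rank hrank x hx1
      (fun v hv => by rw [hx2 v hv]; split_ifs <;> norm_num) (Finset.univ.sup rank) r (by omega)
      (Or.inl (by rw [hx2 r hrs]; simp))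
    refine ⟨es, (isPath_iff_fwalk tl hd s es (hne es hes) r).2 hes, ?_⟩
    obtain ⟨δ, hδ, hδ1, hδ2⟩ := exists_small x es hpos
    have hA : (fun e => (1 + δ) * x e + (-δ) * inc es e) ∈ P := by
      refine (hPm _).2 ⟨fun e => ?_, fun v hv => ?_⟩
      · by_cases he : e ∈ es
        · have := hδ2 e he
          have := mul_nonneg hδ.le (hx1 e)
          simp only [inc, he, if_true]; linarith
        · have := hx1 e
          have := mul_nonneg hδ.le (hx1 e)
          simp only [inc, he, if_false]; linarith
      · rw [netOut_comb, hinc es hes v hv, hx2 v hv]; ring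
    have hB : (fun e => (1 - δ) * x e + δ * inc es e) ∈ P := by
      refine (hPm _).2 ⟨fun e => ?_, fun v hv => ?_⟩
      · have h1 := mul_nonneg (sub_nonneg.2 hδ1) (hx1 e)
        have h2 : 0 ≤ inc es e := by unfold inc; split_ifs <;> norm_num
        positivity
      · rw [netOut_comb, hinc es hes v hv, hx2 v hv]; ring
    have h3 := hext _ hA _ hB ⟨1/2, 1/2, by norm_num, by norm_num, by norm_num, by
      funext e; simp; ring⟩
    funext e
    have h4 := congrFun h3.1 e
    have h4 : (1 + δ) * x e + (-δ) * inc es e = x e := h4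
    have h5 : δ * (x e - inc es e) = 0 := by linarith
    rcases mul_eq_zero.1 h5 with h6 | h6
    · exact absurd h6 hδ.ne'
    · have : x e = inc es e := by linarith
      exact this
  · rintro ⟨es, hpath, hxe⟩
    have hes := (isPath_iff_fwalk tl hd s es hpath.1 r).1 hpath
    change x = inc es at hxe
    have huniq : ∀ y ∈ P, (∀ e, e ∉ es → y e = 0) → y = x := by
      intro y hy hsupp
      have h := supp_zero tl hd s hs rank hrank es r hes (fun e => 1 * y e + (-1) * inc es e)
        (fun v hv => by rw [netOut_comb, hinc es hes v hv, ((hPm y).1 hy).2 v hv]; ring)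
        (fun e he => by simp [inc, he, hsupp e he])
      funext e
      have := congrFun h e
      simp only [Pi.zero_apply] at this
      rw [hxe]; linarith
    refine ⟨(hPm x).2 ⟨fun e => ?_, fun v hv => ?_⟩, ?_⟩
    · rw [hxe]; unfold inc; split_ifs <;> norm_num
    · rw [hxe]; exact hinc es hes v hv
    · rintro y hy z hz ⟨a, b, ha, hb, hab, h⟩
      have hy1 := ((hPm y).1 hy).1
      have hz1 := ((hPm z).1 hz).1
      have hh : ∀ e, e ∉ es → a * y e = 0 ∧ b * z e = 0 := by
        intro e he
        have h1 := congrFun h e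
        rw [hxe] at h1
        simp only [Pi.add_apply, Pi.smul_apply, smul_eq_mul, inc, he, if_false] at h1
        have h2 := mul_nonneg ha.le (hy1 e)
        have h3 := mul_nonneg hb.le (hz1 e)
        constructor <;> linarith
      exact ⟨huniq y hy fun e he => (mul_eq_zero.1 (hh e he).1).resolve_left ha.ne',
        huniq z hz fun e he => (mul_eq_zero.1 (hh e he).2).resolve_left hb.ne'⟩
end

section
/- Let G = (V, E) be a finite directed acyclic graph with two distinct nodes r and s such that r has no incoming edges and s has no outgoing edges, and let m ∈ ℕ. Then every integer-valued flow of value m from r to s, i.e., every x : E → ℕ satisfying flow conservation at each node v ∉ {r, s} and total outflow of r equal to m, can be decomposed into m paths: there exist directed paths P_1,…,P_m from r to s (not necessarily distinct) such that x is the sum of their edge incidence vectors. -/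
open Finset

lemma flow_single {V E : Type} [Fintype V] [Fintype E] [DecidableEq V] [DecidableEq E]
    (tl hd : E → V) (s : V) (rank : V → ℕ) (x : E → ℕ)
    (e : E) (he : 0 < x e) (h : hd e = s) :
    ∃ es : List E, IsPath tl hd (tl e) s (e :: es) ∧ (∀ g ∈ e :: es, 0 < x g) ∧
      (∀ g ∈ e :: es, rank (tl e) ≤ rank (tl g)) ∧
      ∀ v, (∑ g ∈ univ.filter (fun g => hd g = v), if g ∈ e :: es then 1 else 0)
          + (if v = tl e then 1 else 0) =
        (∑ g ∈ univ.filter (fun g => tl g = v), if g ∈ e :: es then 1 else 0)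
          + (if v = s then 1 else 0) := by
  refine ⟨[], ⟨by simp, List.isChain_singleton _, by simp, by simpa using h⟩,
    by simpa using he, by simp, ?_⟩
  intro v
  simp only [List.mem_singleton, Finset.sum_ite_eq', Finset.mem_filter, Finset.mem_univ, true_and,
    h, eq_comm (a := v)]
  omega

lemma flow_next {V E : Type} [Fintype V] [Fintype E] [DecidableEq V] [DecidableEq E]
    (tl hd : E → V) (r s : V) (hr : ∀ e, hd e ≠ r) (x : E → ℕ)
    (hcons : ∀ v, v ≠ r → v ≠ s →
      ∑ e ∈ univ.filter (fun e => hd e = v), x e =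
        ∑ e ∈ univ.filter (fun e => tl e = v), x e)
    (e : E) (he : 0 < x e) (h : hd e ≠ s) : ∃ f, tl f = hd e ∧ 0 < x f := by
  by_contra! hc
  have h1 := hcons (hd e) (hr e) h
  rw [Finset.sum_eq_zero (s := univ.filter (fun f => tl f = hd e))] at h1
  · have := (Finset.sum_eq_zero_iff.1 h1) e (by simp)
    omega
  · intro f hf
    have := hc f (by simpa using hf)
    omega

lemma flow_path_exists {V E : Type} [Fintype V] [Fintype E] [DecidableEq V] [DecidableEq E]
    (tl hd : E → V) (r s : V)
    (hr : ∀ e, hd e ≠ r)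
    (rank : V → ℕ) (hrank : ∀ e, rank (tl e) < rank (hd e)) (x : E → ℕ)
    (hcons : ∀ v, v ≠ r → v ≠ s →
      ∑ e ∈ univ.filter (fun e => hd e = v), x e =
        ∑ e ∈ univ.filter (fun e => tl e = v), x e)
    (n : ℕ) : ∀ e, 0 < x e → univ.sup rank - rank (hd e) ≤ n →
    ∃ es : List E, IsPath tl hd (tl e) s (e :: es) ∧ (∀ g ∈ e :: es, 0 < x g) ∧
      (∀ g ∈ e :: es, rank (tl e) ≤ rank (tl g)) ∧
      ∀ v, (∑ g ∈ univ.filter (fun g => hd g = v), if g ∈ e :: es then 1 else 0)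
          + (if v = tl e then 1 else 0) =
        (∑ g ∈ univ.filter (fun g => tl g = v), if g ∈ e :: es then 1 else 0)
          + (if v = s then 1 else 0) := by
  induction n with
  | zero => 
    intro e he hn
    by_cases h : hd e = s
    · exact flow_single tl hd s rank x e he h
    · obtain ⟨f, hf, hxf⟩ := flow_next tl hd r s hr x hcons e he h
      have h1 := hrank f
      have h2 : rank (hd f) ≤ univ.sup rank := Finset.le_sup (mem_univ _)
      rw [hf] at h1
      omega
  | succ n ih =>
    intro e he hn
    by_cases h : hd e = s
    · exact flow_single tl hd s rank x e he h
    · obtain ⟨f, hf, hxf⟩ := flow_next tl hd r s hr x hcons e he h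
      have h1 := hrank f
      have h2 : rank (hd f) ≤ univ.sup rank := Finset.le_sup (mem_univ _)
      have h3 := hrank e
      rw [hf] at h1
      obtain ⟨es, ⟨hne, hch, hhd, hl⟩, hpos, hrk, hbal⟩ := ih f hxf (by omega)
      refine ⟨f :: es, ⟨by simp, ?_, by simp, ?_⟩, ?_, ?_, ?_⟩
      · exact List.isChain_cons_cons.2 ⟨hf.symm, hch⟩
      · rw [List.getLast_cons hne]; exact hl
      · intro g hg
        rcases List.mem_cons.1 hg with rfl | hg
        · exact he
        · exact hpos g hg
      · intro g hg
        rcases List.mem_cons.1 hg with rfl | hg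
        · exact le_rfl
        · have := hrk g hg
          rw [hf] at this
          omega
      · have hnot : e ∉ f :: es := by
          intro hm
          have := hrk e hm
          rw [hf] at this
          omega
        have key : ∀ g, (if g ∈ e :: f :: es then 1 else 0) =
            (if g ∈ f :: es then 1 else 0) + (if g = e then 1 else 0) := by
          intro g
          by_cases hg : g = e
          · subst hg
            rw [if_pos List.mem_cons_self, if_neg hnot, if_pos rfl]
          · simp only [List.mem_cons (b := e), hg, false_or, if_false, add_zero]
        intro v
        have hb := hbal v
        rw [Finset.sum_congr rfl (fun g _ => key g), Finset.sum_congr rfl (fun g _ => key g),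
          Finset.sum_add_distrib, Finset.sum_add_distrib]
        simp only [Finset.sum_ite_eq', Finset.mem_filter, Finset.mem_univ, true_and]
        rw [hf] at hb
        simp only [eq_comm (a := v)] at hb ⊢
        omega

/-- In a finite DAG with source `r` (no incoming edges) and sink `s` (no outgoing
edges), every integer-valued flow of value `m` from `r` to `s` decomposes into `m`
directed paths from `r` to `s`: `x` is the sum of their edge incidence vectors. -/
theorem integral_flow_decomposes_into_paths
    {V E : Type} [Fintype V] [Fintype E] [DecidableEq V] [DecidableEq E]
    (tl hd : E → V) (r s : V) (hrs : r ≠ s)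
    (hr : ∀ e, hd e ≠ r) (hs : ∀ e, tl e ≠ s)
    -- acyclicity, witnessed by a rank function
    (rank : V → ℕ) (hrank : ∀ e, rank (tl e) < rank (hd e))
    (m : ℕ) (x : E → ℕ)
    -- flow conservation at every node other than r and s
    (hcons : ∀ v, v ≠ r → v ≠ s →
      ∑ e ∈ univ.filter (fun e => hd e = v), x e =
        ∑ e ∈ univ.filter (fun e => tl e = v), x e)
    -- total outflow of r equal to m
    (hval : ∑ e ∈ univ.filter (fun e => tl e = r), x e = m) :
    ∃ Ps : Fin m → List E, (∀ k, IsPath tl hd r s (Ps k)) ∧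
      ∀ e, x e = ∑ k, if e ∈ Ps k then 1 else 0 := by
  induction m generalizing x with
  | zero =>
    refine ⟨fun k => k.elim0, fun k => k.elim0, ?_⟩
    have h0 : ∀ n, ∀ e, rank (tl e) < n → x e = 0 := by
      intro n
      induction n with
      | zero => intro e h; omega
      | succ n ih =>
        intro e h
        have hz : ∑ f ∈ univ.filter (fun f => tl f = tl e), x f = 0 := by
          by_cases h1 : tl e = r
          · rw [h1]; exact hval
          · rw [← hcons _ h1 (hs e)]
            refine Finset.sum_eq_zero fun f hf => ih f ?_
            have h2 := hrank f
            rw [(Finset.mem_filter.1 hf).2] at h2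
            omega
        exact Finset.sum_eq_zero_iff.1 hz e (by simp)
    intro e
    simpa using h0 _ e (Nat.lt_succ_self _)
  | succ m ih =>
    obtain ⟨e, her, he⟩ : ∃ e, tl e = r ∧ 0 < x e := by
      by_contra! hc
      rw [Finset.sum_eq_zero] at hval
      · omega
      · intro f hf
        have := hc f (by simpa using hf)
        omega
    obtain ⟨es, hp, hpos, -, hbal⟩ :=
      flow_path_exists tl hd r s hr rank hrank x hcons _ e he le_rfl
    rw [her] at hp hbal
    generalize e :: es = L at hp hpos hbal
    obtain ⟨y, hy⟩ : ∃ y : E → ℕ, ∀ g, x g = (if g ∈ L then 1 else 0) + y g := by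
      refine ⟨fun g => x g - (if g ∈ L then 1 else 0), fun g => ?_⟩
      by_cases hg : g ∈ L
      · have := hpos g hg
        simp only [hg, if_true]
        omega
      · simp [hg]
    simp only [hy, Finset.sum_add_distrib] at hcons hval
    obtain ⟨Ps, hPs, hsum⟩ := ih y
      (by
        intro v h1 h2
        have a := hcons v h1 h2
        have b := hbal v
        rw [if_neg h1, if_neg h2] at b
        omega)
      (by
        have b := hbal r
        rw [if_pos rfl, if_neg hrs, Finset.sum_eq_zero (s := univ.filter (fun g => hd g = r))] at b
        · omega
        · intro g hg
          exact absurd (Finset.mem_filter.1 hg).2 (hr g))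
    refine ⟨Fin.cons L Ps, ?_, ?_⟩
    · intro k
      refine Fin.cases ?_ ?_ k
      · simpa using hp
      · intro i; simpa using hPs i
    · intro g
      rw [Fin.sum_univ_succ, hy g, hsum g]
      simp
end

section
/- Let G = (V, E) be a finite directed acyclic graph with two distinct nodes r and s such that r has no incoming edges and s has no outgoing edges, and let m ≥ 0 be a real number. Let x : E → ℝ with x_e ≥ 0 satisfy flow conservation at every node v ∉ {r, s} and have total outflow of r equal to m. If E' ⊆ E is a set of edges such that every directed path from r to s contains at most one edge of E', then Σ_{e∈E'} x_e ≤ m. -/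
open Finset

/-- Walks (possibly empty) as lists of edges. -/
def WalkL {E V : Type} (tl hd : E → V) : V → V → List E → Prop
  | u, v, [] => u = v
  | u, v, e :: l => tl e = u ∧ WalkL tl hd (hd e) v l

theorem WalkL.append {E V : Type} {tl hd : E → V} {u v w : V} {l l' : List E}
    (h : WalkL tl hd u v l) (h' : WalkL tl hd v w l') : WalkL tl hd u w (l ++ l') := by
  induction l generalizing u with
  | nil => cases h; exact h'
  | cons e l ih => exact ⟨h.1, ih h.2⟩

theorem WalkL.isPath {E V : Type} {tl hd : E → V} {u v : V} {l : List E}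
    (h : WalkL tl hd u v l) (hl : l ≠ []) : IsPath tl hd u v l := by
  induction l generalizing u with
  | nil => exact absurd rfl hl
  | cons e l ih =>
    cases l with
    | nil => exact ⟨hl, List.isChain_singleton _, h.1, h.2⟩
    | cons e' l =>
      obtain ⟨h1, h2, h3, h4⟩ := ih h.2 (by simp)
      refine ⟨hl, List.isChain_cons_cons.2 ⟨h.2.1.symm, h2⟩, h.1, ?_⟩
      simpa using h4

/-- In a finite DAG with source `r` (no incoming edges) and sink `s` (no outgoing
edges), let `x ≥ 0` be a flow of value `m ≥ 0` from `r` to `s`.  If every directed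
path from `r` to `s` contains at most one edge of `E'`, then the total flow on `E'`
is at most `m`. -/
theorem flow_on_path_incomparable_edge_set_le_value
    {V E : Type} [Fintype V] [Fintype E] [DecidableEq V] [DecidableEq E]
    (tl hd : E → V) (r s : V) (hrs : r ≠ s)
    (hr : ∀ e, hd e ≠ r) (hs : ∀ e, tl e ≠ s)
    -- acyclicity, witnessed by a rank function
    (rank : V → ℕ) (hrank : ∀ e, rank (tl e) < rank (hd e))
    (m : ℝ) (hm : 0 ≤ m) (x : E → ℝ) (hx0 : ∀ e, 0 ≤ x e)
    -- flow conservation at every node other than r and s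
    (hcons : ∀ v, v ≠ r → v ≠ s →
      ∑ e ∈ univ.filter (fun e => hd e = v), x e =
        ∑ e ∈ univ.filter (fun e => tl e = v), x e)
    -- total outflow of r equal to m
    (hval : ∑ e ∈ univ.filter (fun e => tl e = r), x e = m)
    (E' : Finset E)
    -- every r-s path contains at most one edge of E'
    (hE' : ∀ es : List E, IsPath tl hd r s es →
      es.countP (fun e => decide (e ∈ E')) ≤ 1) :
    ∑ e ∈ E', x e ≤ m := by
  have hpred : ∀ e, 0 < x e → tl e ≠ r → ∃ e', 0 < x e' ∧ hd e' = tl e := by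
    intro e he hne
    have h1 : 0 < ∑ e' ∈ univ.filter (fun e' => tl e' = tl e), x e' :=
      lt_of_lt_of_le he (Finset.single_le_sum (f := x) (fun i _ => hx0 i) (by simp))
    rw [← hcons _ hne (hs e)] at h1
    obtain ⟨e', h2, h3⟩ := Finset.exists_lt_of_sum_lt (f := fun _ => (0:ℝ)) (by simpa using h1)
    exact ⟨e', h3, by simpa using h2⟩
  have hsucc : ∀ e, 0 < x e → hd e ≠ s → ∃ e', 0 < x e' ∧ tl e' = hd e := by
    intro e he hne
    have h1 : 0 < ∑ e' ∈ univ.filter (fun e' => hd e' = hd e), x e' :=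
      lt_of_lt_of_le he (Finset.single_le_sum (f := x) (fun i _ => hx0 i) (by simp))
    rw [hcons _ (hr e) hne] at h1
    obtain ⟨e', h2, h3⟩ := Finset.exists_lt_of_sum_lt (f := fun _ => (0:ℝ)) (by simpa using h1)
    exact ⟨e', h3, by simpa using h2⟩
  have hA : ∀ n, ∀ e, rank (tl e) = n → 0 < x e → ∃ l, WalkL tl hd r (tl e) l := by
    intro n
    induction n using Nat.strong_induction_on with
    | _ n ih =>
      intro e hn he
      by_cases h : tl e = r
      · exact ⟨[], h.symm⟩
      · obtain ⟨e', h1, h2⟩ := hpred e he h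
        obtain ⟨l, hl⟩ := ih (rank (tl e')) (by have := hrank e'; rw [h2] at this; omega) e' rfl h1
        exact ⟨l ++ [e'], hl.append ⟨rfl, h2⟩⟩
  obtain ⟨N, hN⟩ : ∃ N, ∀ v, rank v ≤ N :=
    ⟨∑ v, rank v, fun v => Finset.single_le_sum (f := rank) (fun _ _ => Nat.zero_le _) (by simp)⟩
  have hB : ∀ n, ∀ e, N - rank (hd e) = n → 0 < x e → ∃ l, WalkL tl hd (hd e) s l := by
    intro n
    induction n using Nat.strong_induction_on with
    | _ n ih =>
      intro e hn he
      by_cases h : hd e = s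
      · exact ⟨[], h⟩
      · obtain ⟨e', h1, h2⟩ := hsucc e he h
        have h3 := hrank e'
        have h4 := hN (hd e')
        rw [h2] at h3
        obtain ⟨l, hl⟩ := ih (N - rank (hd e')) (by omega) e' rfl h1
        exact ⟨e' :: l, h2, hl⟩
  let T : V → Prop := fun v => ∃ f ∈ E', 0 < x f ∧ ∃ l, WalkL tl hd (hd f) v l
  have hTstep : ∀ e, T (tl e) → T (hd e) := by
    rintro e ⟨f, hf, hxf, l, hl⟩
    exact ⟨f, hf, hxf, l ++ [e], hl.append ⟨rfl, rfl⟩⟩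
  have hThd : ∀ e ∈ E', 0 < x e → T (hd e) := fun e he hxe => ⟨e, he, hxe, [], rfl⟩
  have hTtl : ∀ e ∈ E', 0 < x e → ¬ T (tl e) := by
    rintro e he hxe ⟨f, hf, hxf, l, hl⟩
    obtain ⟨a, ha⟩ := hA _ f rfl hxf
    obtain ⟨b, hb⟩ := hB _ e rfl hxe
    have hw : WalkL tl hd r s (a ++ f :: (l ++ e :: b)) :=
      ha.append ⟨rfl, hl.append ⟨rfl, hb⟩⟩
    have := hE' _ (hw.isPath (by simp))
    simp [List.countP_append, List.countP_cons, he, hf] at this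
    omega
  have hwalk_r : ∀ l u, u ≠ r → ¬ WalkL tl hd u r l := by
    intro l
    induction l with
    | nil => intro u hu h; exact hu h
    | cons e l ih => intro u _ h; exact ih _ (hr e) h.2
  have hTr : ¬ T r := by
    rintro ⟨f, _, _, l, hl⟩
    exact hwalk_r l _ (hr f) hl
  classical
  let p : V → ℝ := fun v => if T v then 0 else 1
  have hp0 : ∀ v, 0 ≤ p v := by intro v; simp only [p]; split_ifs <;> norm_num
  have hfib : ∀ g : E → V, ∑ v, p v * ∑ e ∈ univ.filter (fun e => g e = v), x e
      = ∑ e, p (g e) * x e := by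
    intro g
    rw [← Finset.sum_fiberwise (s := univ) (g := g) (f := fun e => p (g e) * x e)]
    refine Finset.sum_congr rfl fun v _ => ?_
    rw [Finset.mul_sum]
    refine Finset.sum_congr rfl fun e he => ?_
    rw [(Finset.mem_filter.1 he).2]
  have hle : ∑ e, (p (tl e) * x e - p (hd e) * x e) ≤ m := by
    rw [Finset.sum_sub_distrib, ← hfib tl, ← hfib hd, ← Finset.sum_sub_distrib]
    calc _ ≤ ∑ v, (if v = r then m else 0) := by
          refine Finset.sum_le_sum fun v _ => ?_
          have hin : 0 ≤ p v * ∑ e ∈ univ.filter (fun e => hd e = v), x e :=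
            mul_nonneg (hp0 v) (Finset.sum_nonneg fun i _ => hx0 i)
          by_cases h1 : v = r
          · subst h1
            have : p v = 1 := by simp [p, hTr]
            rw [hval, if_pos rfl, this] 
            rw [this] at hin
            linarith
          · rw [if_neg h1]
            by_cases h2 : v = s
            · have : univ.filter (fun e => tl e = v) = ∅ := by
                ext e; simp [h2, hs e]
              rw [this]; simp only [Finset.sum_empty]; linarith
            · rw [hcons v h1 h2]; simp
      _ = m := by simp
  refine le_trans ?_ hle
  rw [← Finset.sum_filter_add_sum_filter_not univ (fun e => e ∈ E')]
  have h1 : ∑ e ∈ E', x e ≤ ∑ e ∈ univ.filter (fun e => e ∈ E'), (p (tl e) * x e - p (hd e) * x e) := by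
    rw [Finset.filter_mem_eq_inter, Finset.univ_inter]
    refine Finset.sum_le_sum fun e he => ?_
    rcases (hx0 e).eq_or_lt with h | h
    · simp [← h]
    · simp [p, hTtl e he h, hThd e he h]
  have h2 : 0 ≤ ∑ e ∈ univ.filter (fun e => ¬ e ∈ E'), (p (tl e) * x e - p (hd e) * x e) := by
    refine Finset.sum_nonneg fun e _ => ?_
    rw [← sub_mul]
    refine mul_nonneg ?_ (hx0 e)
    by_cases h : T (tl e)
    · simp [p, h, hTstep e h]
    · simp only [p, if_neg h]; split_ifs <;> norm_num
  linarith
end
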